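/- Let α ∈ 𝒦 and let γ, δ ∈ ℝ. Then there exists a set 𝒢 = 𝒢(α,γ,δ) ⊆ Bad of Hausdorff dimension dim_H(𝒢) = 1 such that for every β ∈ 𝒢 there exist a constant c > 0 and a threshold N₀ such that for all integers N ≥ N₀ one has #{n ∈ {1,…,N} : n·‖nα − γ‖·‖nβ − δ‖ ≤ 1/log n} ≥ c·log log N. -/

import Mathlib

open Filter MeasureTheory Real

/-- Distance from `x` to the nearest integer, `‖x‖ = min {|x - k| : k ∈ ℤ}`. -/
noncomputable def dni (x : ℝ) : ℝ := |x - round x|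

/-- The set of badly approximable numbers. -/
noncomputable def Bad : Set ℝ :=
  {α : ℝ | 0 < Filter.atTop.liminf (fun n : ℕ => (n : ℝ) * dni (n * α))}

/-- The `t`-th continued fraction convergent denominator `q_t(α)` of `α`. -/
noncomputable def qden (α : ℝ) (t : ℕ) : ℝ := (GenContFract.of α).dens t

/-- The set `𝒦` of irrationals whose convergent denominators grow at most exponentially. -/
noncomputable def KSet : Set ℝ :=
  {α : ℝ | Irrational α ∧ ∃ C : ℝ, ∀ t : ℕ, 1 ≤ t → Real.log (qden α t) / t ≤ C}


namespace Tw

/-- A two by two matrix of natural numbers. -/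
structure Mb where
  A : ℕ
  B : ℕ
  C : ℕ
  D : ℕ

/-- Matrix product. -/
def Mb.mul (g h : Mb) : Mb :=
  ⟨g.A * h.A + g.B * h.C, g.A * h.B + g.B * h.D, g.C * h.A + g.D * h.C, g.C * h.B + g.D * h.D⟩

/-- Identity. -/
def Mb.one : Mb := ⟨1, 0, 0, 1⟩

/-- Transpose. -/
def Mb.tr (g : Mb) : Mb := ⟨g.A, g.C, g.B, g.D⟩

/-- Moebius action. -/
noncomputable def Mb.ev (g : Mb) (x : ℝ) : ℝ := (g.A * x + g.B) / (g.C * x + g.D)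

/-- The weak invariant of products. -/
structure Mb.Gd (g : Mb) : Prop where
  det : g.A * g.D = g.B * g.C + 1
  hCD : g.C ≤ g.D

theorem Mb.Gd.D_pos {g : Mb} (h : g.Gd) : 1 ≤ g.D := by
  rcases Nat.eq_zero_or_pos g.D with h0 | h0
  · have := h.det; rw [h0] at this; simp at this
  · exact h0

theorem Mb.one_Gd : Mb.one.Gd := ⟨by simp [Mb.one], by simp [Mb.one]⟩

/-- The strong condition on generators. -/
structure Mb.OK (g : Mb) : Prop where
  det : g.A * g.D = g.B * g.C + 1
  hAB : g.A ≤ g.B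
  hAC : g.A ≤ g.C
  hBD : g.B ≤ g.D
  hCD : g.C ≤ g.D

theorem Mb.OK.gd {g : Mb} (h : g.OK) : g.Gd := ⟨h.det, h.hCD⟩

theorem Mb.OK.tr {g : Mb} (h : g.OK) : g.tr.OK :=
  ⟨by simp only [Mb.tr]; rw [h.det]; ring, h.hAC, h.hAB, h.hCD, h.hBD⟩

theorem Mb.Gd.mul {g u : Mb} (hg : g.Gd) (hu : u.OK) : (g.mul u).Gd := by
  refine ⟨?_, ?_⟩
  · have h1 := hg.det
    have h2 := hu.det
    simp only [Mb.mul]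
    zify at *
    linear_combination (u.A * u.D - u.B * u.C : ℤ) * h1 + h2
  · simp only [Mb.mul]
    exact Nat.add_le_add (Nat.mul_le_mul_left _ hu.hAB) (Nat.mul_le_mul_left _ hu.hCD)

theorem Mb.den_pos {g : Mb} (hg : g.Gd) {x : ℝ} (hx : 0 ≤ x) : 0 < (g.C : ℝ) * x + g.D := by
  have : (1:ℝ) ≤ g.D := by exact_mod_cast hg.D_pos
  positivity

theorem Mb.detR {g : Mb} (hg : g.Gd) : (g.A : ℝ) * g.D = g.B * g.C + 1 := by
  exact_mod_cast hg.det

theorem Mb.ev_sub {g : Mb} (hg : g.Gd) {x y : ℝ} (hx : 0 ≤ x) (hy : 0 ≤ y) :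
    g.ev x - g.ev y = (x - y) / ((g.C * x + g.D) * (g.C * y + g.D)) := by
  have h1 := Mb.den_pos hg hx
  have h2 := Mb.den_pos hg hy
  have h3 := Mb.detR hg
  simp only [Mb.ev]
  rw [div_sub_div _ _ h1.ne' h2.ne']
  congr 1
  linear_combination (x - y) * h3

theorem Mb.ev_mul {g u : Mb} (hg : g.Gd) (hu : u.Gd) {x : ℝ} (hx : 0 ≤ x) :
    (g.mul u).ev x = g.ev (u.ev x) := by
  have h1 := Mb.den_pos hu hx
  have h0 : 0 ≤ u.ev x := by simp only [Mb.ev]; positivity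
  have h2 := Mb.den_pos hg h0
  have h3 : ((g.mul u).C : ℝ) * x + (g.mul u).D = (u.C * x + u.D) * (g.C * u.ev x + g.D) := by
    simp only [Mb.ev, Mb.mul]
    push_cast
    field_simp
    ring
  have h4 : ((g.mul u).A : ℝ) * x + (g.mul u).B = (u.C * x + u.D) * (g.A * u.ev x + g.B) := by
    simp only [Mb.ev, Mb.mul]
    push_cast
    field_simp
    ring
  rw [Mb.ev, h3, h4, mul_div_mul_left _ _ h1.ne']
  rfl

theorem Mb.ev_nonneg (g : Mb) {x : ℝ} (hx : 0 ≤ x) : 0 ≤ g.ev x := by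
  simp only [Mb.ev]; positivity

theorem Mb.OK.ev_le_one {g : Mb} (h : g.OK) {x : ℝ} (hx : 0 ≤ x) : g.ev x ≤ 1 := by
  have h1 := Mb.den_pos h.gd hx
  simp only [Mb.ev]
  rw [div_le_one h1]
  have h2 : (g.A : ℝ) ≤ g.C := by exact_mod_cast h.hAC
  have h3 : (g.B : ℝ) ≤ g.D := by exact_mod_cast h.hBD
  nlinarith

theorem Mb.OK.ev_mem {g : Mb} (h : g.OK) {x : ℝ} (hx : x ∈ Set.Icc (0:ℝ) 1) :
    g.ev x ∈ Set.Icc (0:ℝ) 1 := ⟨g.ev_nonneg hx.1, h.ev_le_one hx.1⟩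

/-- A finite system of generators with all properties needed below. -/
structure Sys where
  M : ℕ
  K : ℕ
  Q : ℕ
  U : Fin M → Mb
  c0 : ℝ
  c0_pos : 0 < c0
  kap : ℝ
  kap_pos : 0 < kap
  ok : ∀ i, (U i).OK
  hK : ∀ i, K ≤ (U i).D
  hQ : ∀ i, 2 * (U i).D ≤ Q
  hKQ : Q ≤ K ^ 2
  hQ4 : 4 ≤ Q
  hM2 : 2 ≤ M
  hMQ : M ≤ Q ^ 2
  hM : Q ^ 33 ≤ M ^ 17
  low : ∀ i, ∀ x ∈ Set.Icc (0:ℝ) 1, kap ≤ (U i).ev x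
  sep : ∀ i j, i ≠ j → ∀ x ∈ Set.Icc (0:ℝ) 1, ∀ y ∈ Set.Icc (0:ℝ) 1,
    c0 ≤ |(U i).ev x - (U j).ev y|
  rsep : ∀ i j, i ≠ j → ∀ x ∈ Set.Icc (0:ℝ) 1, ∀ y ∈ Set.Icc (0:ℝ) 1,
    c0 ≤ |(U i).tr.ev x - (U j).tr.ev y|

namespace Sys
variable (S : Sys)

/-- Right multiplication by a word. -/
def fd (g : Mb) (l : List (Fin S.M)) : Mb := l.foldl (fun g i => g.mul (S.U i)) g

/-- Action of a word. -/
noncomputable def ew (l : List (Fin S.M)) (x : ℝ) : ℝ := l.foldr (fun i y => (S.U i).ev y) x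

theorem fd_nil (g : Mb) : S.fd g [] = g := rfl
theorem fd_cons (g : Mb) (i) (l) : S.fd g (i :: l) = S.fd (g.mul (S.U i)) l := rfl
theorem fd_append (g : Mb) (l l') : S.fd g (l ++ l') = S.fd (S.fd g l) l' := by
  simp [fd]
theorem fd_snoc (g : Mb) (l) (i) : S.fd g (l ++ [i]) = (S.fd g l).mul (S.U i) := by
  simp [fd]
theorem ew_nil (x) : S.ew [] x = x := rfl
theorem ew_cons (i) (l) (x) : S.ew (i :: l) x = (S.U i).ev (S.ew l x) := rfl
theorem ew_append (l l') (x) : S.ew (l ++ l') x = S.ew l (S.ew l' x) := by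
  simp [ew]

theorem fd_Gd {g : Mb} (hg : g.Gd) (l) : (S.fd g l).Gd := by
  induction l generalizing g with
  | nil => exact hg
  | cons i l ih => exact ih (hg.mul (S.ok i))

theorem ew_mem (l) {x : ℝ} (hx : x ∈ Set.Icc (0:ℝ) 1) : S.ew l x ∈ Set.Icc (0:ℝ) 1 := by
  induction l with
  | nil => exact hx
  | cons i l ih => exact (S.ok i).ev_mem ih

theorem ev_fd {g : Mb} (hg : g.Gd) (l) {x : ℝ} (hx : x ∈ Set.Icc (0:ℝ) 1) :
    (S.fd g l).ev x = g.ev (S.ew l x) := by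
  induction l generalizing g with
  | nil => rfl
  | cons i l ih =>
    rw [fd_cons, ih (hg.mul (S.ok i)), Mb.ev_mul hg (S.ok i).gd (S.ew_mem l hx).1, ew_cons]

theorem one_ev (x : ℝ) : Mb.one.ev x = x := by simp [Mb.one, Mb.ev]

theorem ew_eq (l) {x : ℝ} (hx : x ∈ Set.Icc (0:ℝ) 1) : S.ew l x = (S.fd Mb.one l).ev x := by
  rw [S.ev_fd Mb.one_Gd l hx, one_ev]

theorem D_mul_le {g : Mb} (hg : g.Gd) (i) : (g.mul (S.U i)).D ≤ S.Q * g.D := by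
  have h1 := S.hQ i
  have h2 := (S.ok i).hBD
  have h3 := hg.hCD
  simp only [Mb.mul]
  calc g.C * (S.U i).B + g.D * (S.U i).D ≤ g.D * (S.U i).D + g.D * (S.U i).D := by gcongr
    _ = (2 * (S.U i).D) * g.D := by ring
    _ ≤ _ := by gcongr

theorem le_D_mul {g : Mb} (i) : S.K * g.D ≤ (g.mul (S.U i)).D := by
  have h1 := S.hK i
  simp only [Mb.mul]
  calc S.K * g.D ≤ (S.U i).D * g.D := by gcongr
    _ = g.D * (S.U i).D := by ring
    _ ≤ _ := by omega

theorem D_fd_le {g : Mb} (hg : g.Gd) (l) : (S.fd g l).D ≤ S.Q ^ l.length * g.D := by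
  induction l generalizing g with
  | nil => simp [fd_nil]
  | cons i l ih =>
    rw [fd_cons]
    refine (ih (hg.mul (S.ok i))).trans ?_
    rw [List.length_cons, pow_succ, mul_assoc]
    gcongr
    exact S.D_mul_le hg i

theorem le_D_fd (g : Mb) (l) : S.K ^ l.length * g.D ≤ (S.fd g l).D := by
  induction l generalizing g with
  | nil => simp [fd_nil]
  | cons i l ih =>
    rw [fd_cons]
    refine le_trans ?_ (ih _)
    rw [List.length_cons, pow_succ, mul_assoc]
    gcongr
    exact S.le_D_mul i

theorem K2 : 2 ≤ S.K := by
  have h1 := S.hKQ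
  have h2 := S.hQ4
  by_contra h
  have : S.K ≤ 1 := by omega
  have : S.K ^ 2 ≤ 1 ^ 2 := by gcongr
  omega

theorem Qpos : (0:ℝ) < S.Q := by
  have := S.hQ4
  exact_mod_cast (by omega : 0 < S.Q)

/-- Lower contraction bound. -/
theorem ev_lip_low {g : Mb} (hg : g.Gd) {x y : ℝ} (hx : x ∈ Set.Icc (0:ℝ) 1)
    (hy : y ∈ Set.Icc (0:ℝ) 1) : |x - y| / (2 * g.D) ^ 2 ≤ |g.ev x - g.ev y| := by
  have h1 := Mb.den_pos hg hx.1
  have h2 := Mb.den_pos hg hy.1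
  rw [Mb.ev_sub hg hx.1 hy.1, abs_div, abs_of_pos (mul_pos h1 h2)]
  have hC : (g.C : ℝ) ≤ g.D := by exact_mod_cast hg.hCD
  have h3 : (g.C : ℝ) * x + g.D ≤ 2 * g.D := by nlinarith [hx.1, hx.2, (Nat.cast_nonneg g.C : (0:ℝ) ≤ g.C)]
  have h4 : (g.C : ℝ) * y + g.D ≤ 2 * g.D := by nlinarith [hy.1, hy.2, (Nat.cast_nonneg g.C : (0:ℝ) ≤ g.C)]
  gcongr
  rw [sq]
  gcongr

theorem ev_lip_up {g : Mb} (hg : g.Gd) {x y : ℝ} (hx : x ∈ Set.Icc (0:ℝ) 1)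
    (hy : y ∈ Set.Icc (0:ℝ) 1) : |g.ev x - g.ev y| ≤ 1 / (g.D : ℝ) ^ 2 := by
  have h1 := Mb.den_pos hg hx.1
  have h2 := Mb.den_pos hg hy.1
  rw [Mb.ev_sub hg hx.1 hy.1, abs_div, abs_of_pos (mul_pos h1 h2)]
  have hD : (1:ℝ) ≤ g.D := by exact_mod_cast hg.D_pos
  have h3 : (g.D : ℝ) ≤ (g.C : ℝ) * x + g.D := by
    have := hx.1
    have : 0 ≤ (g.C : ℝ) * x := by positivity
    linarith
  have h4 : (g.D : ℝ) ≤ (g.C : ℝ) * y + g.D := by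
    have := hy.1
    have : 0 ≤ (g.C : ℝ) * y := by positivity
    linarith
  have h5 : |x - y| ≤ 1 := abs_le.2 ⟨by linarith [hx.1, hy.2], by linarith [hx.2, hy.1]⟩
  rw [sq]
  gcongr

/-- Separation of words. -/
theorem ew_sep : ∀ (l l' : List (Fin S.M)), l.length = l'.length → l ≠ l' →
    ∀ x ∈ Set.Icc (0:ℝ) 1, ∀ y ∈ Set.Icc (0:ℝ) 1,
    S.c0 / (S.Q : ℝ) ^ (2 * l.length) ≤ |S.ew l x - S.ew l' y| := by
  intro l
  induction l with
  | nil => intro l' h1 h2; exact absurd (List.length_eq_zero_iff.1 h1.symm).symm h2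
  | cons i l ih =>
    intro l' h1 h2 x hx y hy
    match l' with
    | [] => simp at h1
    | j :: l' =>
      have hQ1 : (1:ℝ) ≤ S.Q := by exact_mod_cast (by have := S.hQ4; omega : 1 ≤ S.Q)
      simp only [ew_cons]
      by_cases hij : i = j
      · subst hij
        have h3 : l ≠ l' := fun h => h2 (by rw [h])
        have h4 := ih l' (by simpa using h1) h3 x hx y hy
        refine le_trans ?_ (ev_lip_low (S.ok i).gd (S.ew_mem l hx) (S.ew_mem l' hy))
        have h5 : (2 * ((S.U i).D : ℝ)) ≤ S.Q := by exact_mod_cast S.hQ i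
        have h6 : (0:ℝ) < (S.U i).D := by exact_mod_cast (S.ok i).gd.D_pos
        calc S.c0 / (S.Q : ℝ) ^ (2 * (i :: l).length)
            = (S.c0 / (S.Q : ℝ) ^ (2 * l.length)) / (S.Q : ℝ) ^ 2 := by
              rw [List.length_cons, div_div, ← pow_add]; rfl
          _ ≤ _ := by gcongr
      · refine le_trans ?_ (S.sep i j hij _ (S.ew_mem l hx) _ (S.ew_mem l' hy))
        exact div_le_self S.c0_pos.le (one_le_pow₀ hQ1)

/-- Ratio of the bottom row. -/
noncomputable def _root_.Tw.Mb.rt (g : Mb) : ℝ := g.C / g.D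

theorem _root_.Tw.Mb.Gd.rt_mem {g : Mb} (hg : g.Gd) : g.rt ∈ Set.Icc (0:ℝ) 1 := by
  have h : (0:ℝ) < g.D := by exact_mod_cast hg.D_pos
  have h2 : (g.C : ℝ) ≤ g.D := by exact_mod_cast hg.hCD
  exact ⟨by unfold Mb.rt; positivity, by unfold Mb.rt; rw [div_le_one h]; exact h2⟩

theorem rt_mul {g : Mb} (hg : g.Gd) (i) : (g.mul (S.U i)).rt = (S.U i).tr.ev g.rt := by
  have h : (0:ℝ) < g.D := by exact_mod_cast hg.D_pos
  have h2 := Mb.den_pos (S.ok i).tr.gd hg.rt_mem.1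
  simp only [Mb.rt, Mb.tr, Mb.ev, Mb.mul] at *
  push_cast
  have h3 : (g.C : ℝ) * (S.U i).B + g.D * (S.U i).D = g.D * ((S.U i).B * (g.C / g.D) + (S.U i).D) := by
    field_simp
  have h4 : (g.C : ℝ) * (S.U i).A + g.D * (S.U i).C = g.D * ((S.U i).A * (g.C / g.D) + (S.U i).C) := by
    field_simp
  rw [h3, h4, mul_div_mul_left _ _ h.ne']

theorem rt_sep {g : Mb} (hg : g.Gd) : ∀ (l l' : List (Fin S.M)), l.length = l'.length → l ≠ l' →
    S.c0 / (S.Q : ℝ) ^ (2 * l.length) ≤ |(S.fd g l).rt - (S.fd g l').rt| := by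
  intro l
  induction l using List.reverseRecOn with
  | nil => intro l' h1 h2; exact absurd (List.length_eq_zero_iff.1 h1.symm).symm h2
  | append_singleton l i ih =>
    intro l' h1 h2
    rcases List.eq_nil_or_concat' l' with rfl | ⟨l', j, rfl⟩
    · simp at h1
    · have hQ1 : (1:ℝ) ≤ S.Q := by exact_mod_cast (by have := S.hQ4; omega : 1 ≤ S.Q)
      have hm := (S.fd_Gd hg l).rt_mem
      have hm' := (S.fd_Gd hg l').rt_mem
      simp only [fd_snoc, S.rt_mul (S.fd_Gd hg _)]
      by_cases hij : i = j
      · subst hij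
        have h3 : l ≠ l' := fun h => h2 (by rw [h])
        have h4 := ih l' (by simpa using h1) h3
        refine le_trans ?_ (ev_lip_low (S.ok i).tr.gd hm hm')
        have h5 : (2 * ((S.U i).tr.D : ℝ)) ≤ S.Q := by exact_mod_cast S.hQ i
        have h6 : (0:ℝ) < (S.U i).tr.D := by exact_mod_cast (S.ok i).gd.D_pos
        calc S.c0 / (S.Q : ℝ) ^ (2 * (l ++ [i]).length)
            = (S.c0 / (S.Q : ℝ) ^ (2 * l.length)) / (S.Q : ℝ) ^ 2 := by
              rw [List.length_append, div_div, ← pow_add]; rfl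
          _ ≤ _ := by gcongr
      · refine le_trans ?_ (S.rsep i j hij _ hm _ hm')
        exact div_le_self S.c0_pos.le (one_le_pow₀ hQ1)

end Sys
end Tw


namespace Tw

/-- The additive character. -/
noncomputable def ee (t : ℝ) : ℂ := Complex.exp ((2 * π * t : ℝ) * Complex.I)

theorem norm_ee (t : ℝ) : ‖ee t‖ = 1 := Complex.norm_exp_ofReal_mul_I _

theorem ee_add (s t : ℝ) : ee (s + t) = ee s * ee t := by
  simp only [ee]; rw [← Complex.exp_add]; congr 1; push_cast; ring

theorem ee_zero : ee 0 = 1 := by simp [ee]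

theorem ee_int (k : ℤ) : ee k = 1 := by
  simp only [ee]
  rw [Complex.exp_eq_one_iff]
  exact ⟨k, by push_cast; ring⟩

theorem ee_conj (t : ℝ) : (starRingEnd ℂ) (ee t) = ee (-t) := by
  simp only [ee]
  rw [← Complex.exp_conj]
  congr 1
  rw [map_mul, Complex.conj_ofReal, Complex.conj_I]
  push_cast
  ring

theorem continuous_ee : Continuous ee := by unfold ee; fun_prop

theorem hasDerivAt_ee_comp {F : ℝ → ℝ} {F' x : ℝ} (h : HasDerivAt F F' x) :
    HasDerivAt (fun x => ee (F x)) ((2 * π * F' : ℝ) * Complex.I * ee (F x)) x := by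
  have h1 : HasDerivAt (fun x => (((2 * π * F x : ℝ)) : ℂ) * Complex.I)
      ((2 * π * F' : ℝ) * Complex.I) x :=
    ((h.const_mul (2 * π)).ofReal_comp).mul_const _
  have := h1.cexp
  simp only [ee]
  convert this using 1
  ring

theorem osc1 {F F1 F2 : ℝ → ℝ} {a b lam M : ℝ} (hab : a ≤ b) (hb1 : b - a ≤ 1)
    (h1 : ∀ x ∈ Set.Icc a b, HasDerivAt F (F1 x) x)
    (h2 : ∀ x ∈ Set.Icc a b, HasDerivAt F1 (F2 x) x)
    (hc : ContinuousOn F2 (Set.Icc a b)) (hl : 0 < lam)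
    (hF1 : ∀ x ∈ Set.Icc a b, lam ≤ |F1 x|) (hF2 : ∀ x ∈ Set.Icc a b, |F2 x| ≤ M) :
    ‖∫ x in a..b, ee (F x)‖ ≤ 1 / lam + M / lam ^ 2 := by
  have hu : Set.uIcc a b = Set.Icc a b := Set.uIcc_of_le hab
  have hne : ∀ x ∈ Set.Icc a b, F1 x ≠ 0 := fun x hx h => by
    have := hF1 x hx; rw [h, abs_zero] at this; linarith
  have cF : ContinuousOn F (Set.Icc a b) := fun x hx => (h1 x hx).continuousAt.continuousWithinAt
  have cF1 : ContinuousOn F1 (Set.Icc a b) := fun x hx => (h2 x hx).continuousAt.continuousWithinAt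
  have cE : ContinuousOn (fun x => ee (F x)) (Set.Icc a b) := continuous_ee.comp_continuousOn cF
  have pc : (2 * π * Complex.I : ℂ) ≠ 0 := by simp [pi_ne_zero]
  set G : ℝ → ℂ := fun x => ee (F x) * (((F1 x)⁻¹ : ℝ) : ℂ) with hG
  set R : ℝ → ℂ := fun x => ee (F x) * ((F2 x / (F1 x) ^ 2 : ℝ) : ℂ) with hR
  have cR : ContinuousOn R (Set.Icc a b) := by
    refine cE.mul (Complex.continuous_ofReal.comp_continuousOn ?_)
    exact hc.div (cF1.pow 2) (fun x hx => pow_ne_zero _ (hne x hx))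
  have hd : ∀ x ∈ Set.uIcc a b, HasDerivAt G (2 * π * Complex.I * ee (F x) - R x) x := by
    intro x hx
    rw [hu] at hx
    have e1 := hasDerivAt_ee_comp (h1 x hx)
    have e2 := ((h2 x hx).inv (hne x hx)).ofReal_comp
    refine (e1.mul e2).congr_deriv ?_
    have : ((F1 x : ℝ) : ℂ) ≠ 0 := by exact_mod_cast hne x hx
    simp only [hR, Pi.inv_apply]
    push_cast
    field_simp
    ring
  have iR : IntervalIntegrable R volume a b := by
    rw [← hu] at cR; exact cR.intervalIntegrable
  have iE : IntervalIntegrable (fun x => ee (F x)) volume a b := by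
    rw [← hu] at cE; exact cE.intervalIntegrable
  have key := intervalIntegral.integral_eq_sub_of_hasDerivAt hd ((iE.const_mul _).sub iR)
  rw [intervalIntegral.integral_sub (iE.const_mul _) iR,
    intervalIntegral.integral_const_mul] at key
  have key2 : 2 * π * Complex.I * ∫ x in a..b, ee (F x) = G b - G a + ∫ x in a..b, R x := by
    rw [← key]; ring
  have nG : ∀ x ∈ Set.Icc a b, ‖G x‖ ≤ 1 / lam := by
    intro x hx
    simp only [hG, norm_mul, norm_ee, one_mul, Complex.norm_real, norm_inv, Real.norm_eq_abs]
    rw [← one_div]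
    exact one_div_le_one_div_of_le hl (hF1 x hx)
  have nR : ‖∫ x in a..b, R x‖ ≤ M / lam ^ 2 * |b - a| := by
    apply intervalIntegral.norm_integral_le_of_norm_le_const
    intro x hx
    rw [Set.uIoc_of_le hab] at hx
    have hx' : x ∈ Set.Icc a b := ⟨hx.1.le, hx.2⟩
    simp only [hR, norm_mul, norm_ee, one_mul, Complex.norm_real, Real.norm_eq_abs, abs_div, abs_pow]
    have hM : 0 ≤ M := (abs_nonneg _).trans (hF2 x hx')
    have := hF1 x hx'
    have := hF2 x hx'
    gcongr
  have hM : 0 ≤ M := (abs_nonneg _).trans (hF2 a ⟨le_rfl, hab⟩)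
  have n0 : ‖(2 * π * Complex.I : ℂ)‖ = 2 * π := by
    simp [abs_of_pos pi_pos]
  have : 2 * π * ‖∫ x in a..b, ee (F x)‖ ≤ 2 * (1 / lam + M / lam ^ 2) := by
    rw [← n0, ← norm_mul, key2]
    calc _ ≤ ‖G b‖ + ‖G a‖ + ‖∫ x in a..b, R x‖ :=
          (norm_add_le _ _).trans (by gcongr; exact norm_sub_le _ _)
      _ ≤ 1 / lam + 1 / lam + M / lam ^ 2 * 1 := by
          gcongr
          · exact nG b ⟨hab, le_rfl⟩
          · exact nG a ⟨le_rfl, hab⟩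
          · refine nR.trans ?_
            gcongr
            rw [abs_of_nonneg (by linarith)]; exact hb1
      _ ≤ _ := by
          have : 0 ≤ M / lam ^ 2 := by positivity
          linarith
  have hp := pi_gt_three
  have hn := norm_nonneg (∫ x in a..b, ee (F x))
  nlinarith

theorem osc2 {F F1 F2 : ℝ → ℝ} {c rho lam M : ℝ} (hrho : 0 ≤ rho)
    (h1 : ∀ x ∈ Set.Icc (0:ℝ) 1, HasDerivAt F (F1 x) x)
    (h2 : ∀ x ∈ Set.Icc (0:ℝ) 1, HasDerivAt F1 (F2 x) x)
    (hc : ContinuousOn F2 (Set.Icc 0 1)) (hl : 0 < lam)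
    (hF1 : ∀ x ∈ Set.Icc (0:ℝ) 1, rho ≤ |x - c| → lam ≤ |F1 x|)
    (hF2 : ∀ x ∈ Set.Icc (0:ℝ) 1, |F2 x| ≤ M) :
    ‖∫ x in (0:ℝ)..1, ee (F x)‖ ≤ 2 * rho + 2 * (1 / lam + M / lam ^ 2) := by
  have hM : 0 ≤ M := (abs_nonneg _).trans (hF2 0 ⟨le_rfl, zero_le_one⟩)
  have hB : 0 ≤ 1 / lam + M / lam ^ 2 := by positivity
  set s := max 0 (min 1 (c - rho)) with hs
  set t := max 0 (min 1 (c + rho)) with ht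
  have s0 : 0 ≤ s := le_max_left _ _
  have t1 : t ≤ 1 := max_le zero_le_one (min_le_left _ _)
  have st : s ≤ t := by
    apply max_le_max le_rfl; apply min_le_min le_rfl; linarith
  have hts : t - s ≤ 2 * rho := by
    rw [hs, ht]
    simp only [max_def, min_def]
    split_ifs <;> linarith
  have cE : ContinuousOn (fun x => ee (F x)) (Set.Icc 0 1) :=
    continuous_ee.comp_continuousOn (fun x hx => (h1 x hx).continuousAt.continuousWithinAt)
  have ii : ∀ a b : ℝ, 0 ≤ a → a ≤ b → b ≤ 1 → IntervalIntegrable (fun x => ee (F x)) volume a b := by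
    intro a b h0 hab hb
    apply ContinuousOn.intervalIntegrable
    rw [Set.uIcc_of_le hab]
    exact cE.mono (Set.Icc_subset_Icc h0 hb)
  have e1 := intervalIntegral.integral_add_adjacent_intervals (ii 0 s le_rfl s0 (st.trans t1))
    (ii s t s0 st t1)
  have e2 := intervalIntegral.integral_add_adjacent_intervals (ii 0 t le_rfl (s0.trans st) t1)
    (ii t 1 (s0.trans st) t1 le_rfl)
  rw [← e2, ← e1]
  have b1 : ‖∫ x in (0:ℝ)..s, ee (F x)‖ ≤ 1 / lam + M / lam ^ 2 := by
    rcases s0.eq_or_lt with h | h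
    · rw [← h]; simpa using hB
    · have hsc : s ≤ c - rho := by
        rw [hs] at h ⊢
        rcases lt_max_iff.1 h with h' | h'
        · exact absurd h' (lt_irrefl _)
        · rw [max_eq_right h'.le]; exact min_le_right _ _
      have hsub : Set.Icc 0 s ⊆ Set.Icc (0:ℝ) 1 := Set.Icc_subset_Icc le_rfl (st.trans t1)
      refine osc1 s0 (by linarith) (fun x hx => h1 x (hsub hx)) (fun x hx => h2 x (hsub hx))
        (hc.mono hsub) hl (fun x hx => hF1 x (hsub hx) ?_) (fun x hx => hF2 x (hsub hx))
      rw [abs_sub_comm]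
      exact le_trans (by linarith [hx.2]) (le_abs_self _)
  have b3 : ‖∫ x in t..1, ee (F x)‖ ≤ 1 / lam + M / lam ^ 2 := by
    rcases t1.eq_or_lt with h | h
    · rw [h]; simpa using hB
    · have hsc : c + rho ≤ t := by
        rw [ht] at h ⊢
        have h' : min 1 (c + rho) < 1 := lt_of_le_of_lt (le_max_right _ _) h
        rcases min_lt_iff.1 h' with h'' | h''
        · exact absurd h'' (lt_irrefl _)
        · rw [min_eq_right h''.le]; exact le_max_right _ _
      have hsub : Set.Icc t 1 ⊆ Set.Icc (0:ℝ) 1 := Set.Icc_subset_Icc (s0.trans st) le_rfl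
      refine osc1 t1 (by linarith) (fun x hx => h1 x (hsub hx)) (fun x hx => h2 x (hsub hx))
        (hc.mono hsub) hl (fun x hx => hF1 x (hsub hx) ?_) (fun x hx => hF2 x (hsub hx))
      exact le_trans (by linarith [hx.1]) (le_abs_self _)
  have b2 : ‖∫ x in s..t, ee (F x)‖ ≤ 2 * rho := by
    have := intervalIntegral.norm_integral_le_of_norm_le_const (a := s) (b := t) (C := 1)
      (f := fun x => ee (F x)) (fun x _ => (norm_ee _).le)
    rw [abs_of_nonneg (by linarith)] at this
    linarith
  calc _ ≤ ‖∫ x in (0:ℝ)..s, ee (F x)‖ + ‖∫ x in s..t, ee (F x)‖ + ‖∫ x in t..1, ee (F x)‖ :=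
        (norm_add_le _ _).trans (by gcongr; exact norm_add_le _ _)
    _ ≤ _ := by linarith

theorem linlow {al be nu rho : ℝ} (hnu : 0 ≤ nu) (h : nu ≤ |al| + |be|) (hr0 : 0 < rho) (hr : rho ≤ 1) :
    ∃ c : ℝ, ∀ x ∈ Set.Icc (0:ℝ) 1, rho ≤ |x - c| → rho * nu / 3 ≤ |al * x + be| := by
  by_cases h1 : nu / 3 ≤ |al|
  · by_cases h0 : al = 0
    · subst h0
      refine ⟨0, fun x _ _ => ?_⟩
      rw [abs_zero] at h1
      have : nu = 0 := by linarith
      subst this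
      simp
    · refine ⟨-be / al, fun x _ hx => ?_⟩
      have : al * x + be = al * (x - -be / al) := by field_simp; ring
      rw [this, abs_mul]
      calc rho * nu / 3 = (nu / 3) * rho := by ring
        _ ≤ _ := by gcongr
  · push Not at h1
    refine ⟨0, fun x hx _ => ?_⟩
    have h2 : |al * x| ≤ nu / 3 := by
      rw [abs_mul, abs_of_nonneg hx.1]
      nlinarith [hx.2, abs_nonneg al]
    have h3 := abs_sub_abs_le_abs_sub be (-(al * x))
    rw [abs_neg, sub_neg_eq_add, add_comm be] at h3
    nlinarith

/-- Off-diagonal estimate. -/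
theorem offdiag {g1 g2 : Mb} (h1 : g1.Gd) (h2 : g2.Gd) {n h Dg P Del rho : ℝ} (hn : 0 < n)
    (hh : 1 ≤ |h|) (hDg : 0 < Dg) (hg1 : Dg ≤ g1.D) (hg2 : Dg ≤ g2.D)
    (hP2 : (g2.D : ℝ) ≤ Dg * P)
    (hDel : 0 < Del) (hsep : Del ≤ |g1.rt - g2.rt|) (hr0 : 0 < rho) (hr : rho ≤ 1) :
    ‖∫ x in (0:ℝ)..1, ee (h * n * (g1.ev x - g2.ev x))‖ ≤
      2 * rho + 2 * (24 * P ^ 2 / (n / Dg ^ 2 * rho * Del)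
        + 2304 * P ^ 4 / (n / Dg ^ 2 * rho ^ 2 * Del ^ 2)) := by
  have d1 : (0:ℝ) < g1.D := by linarith
  have d2 : (0:ℝ) < g2.D := by linarith
  have hPpos : 0 < P := by
    by_contra hc
    push Not at hc
    have : Dg * P ≤ 0 := mul_nonpos_of_nonneg_of_nonpos hDg.le hc
    linarith
  set L1 : ℝ → ℝ := fun x => g1.C * x + g1.D with hL1
  set L2 : ℝ → ℝ := fun x => g2.C * x + g2.D with hL2
  have C1 : (g1.C : ℝ) ≤ g1.D := by exact_mod_cast h1.hCD
  have C2 : (g2.C : ℝ) ≤ g2.D := by exact_mod_cast h2.hCD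
  have C1n : (0:ℝ) ≤ g1.C := by positivity
  have C2n : (0:ℝ) ≤ g2.C := by positivity
  have L1l : ∀ x ∈ Set.Icc (0:ℝ) 1, (g1.D : ℝ) ≤ L1 x := fun x hx => by
    simp only [hL1]; nlinarith [hx.1]
  have L2l : ∀ x ∈ Set.Icc (0:ℝ) 1, (g2.D : ℝ) ≤ L2 x := fun x hx => by
    simp only [hL2]; nlinarith [hx.1]
  have L1u : ∀ x ∈ Set.Icc (0:ℝ) 1, L1 x ≤ 2 * g1.D := fun x hx => by
    simp only [hL1]; nlinarith [hx.2]
  have L2u : ∀ x ∈ Set.Icc (0:ℝ) 1, L2 x ≤ 2 * g2.D := fun x hx => by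
    simp only [hL2]; nlinarith [hx.2]
  have dL1 : ∀ x, HasDerivAt L1 g1.C x := fun x => by
    have := ((hasDerivAt_id x).const_mul (g1.C : ℝ)).add_const (g1.D : ℝ)
    rw [mul_one] at this; exact this
  have dL2 : ∀ x, HasDerivAt L2 g2.C x := fun x => by
    have := ((hasDerivAt_id x).const_mul (g2.C : ℝ)).add_const (g2.D : ℝ)
    rw [mul_one] at this; exact this
  have dev : ∀ (g : Mb), g.Gd → ∀ x ∈ Set.Icc (0:ℝ) 1,
      HasDerivAt g.ev (((g.C : ℝ) * x + g.D) ^ 2)⁻¹ x := by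
    intro g hg x hx
    have hp := Mb.den_pos hg hx.1
    have a1 : HasDerivAt (fun x : ℝ => (g.A : ℝ) * x + g.B) g.A x := by
      have := ((hasDerivAt_id x).const_mul (g.A : ℝ)).add_const (g.B : ℝ)
      rw [mul_one] at this; exact this
    have a2 : HasDerivAt (fun x : ℝ => (g.C : ℝ) * x + g.D) g.C x := by
      have := ((hasDerivAt_id x).const_mul (g.C : ℝ)).add_const (g.D : ℝ)
      rw [mul_one] at this; exact this
    refine (a1.div a2 hp.ne').congr_deriv ?_
    rw [inv_eq_one_div]
    congr 1
    linear_combination Mb.detR hg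
  -- linear form
  have hdet : g1.D * Del ≤ |(g1.C : ℝ) - g2.C| + |(g1.D : ℝ) - g2.D| := by
    have e : (g1.rt - g2.rt) * (g1.D * g2.D) = ((g1.C : ℝ) - g2.C) * g2.D - g2.C * (g1.D - g2.D) := by
      simp only [Mb.rt]; field_simp; ring
    have e2 : |g1.rt - g2.rt| * (g1.D * g2.D) ≤ (|(g1.C : ℝ) - g2.C| + |(g1.D : ℝ) - g2.D|) * g2.D := by
      rw [← abs_of_pos (mul_pos d1 d2), ← abs_mul, e]
      refine (abs_sub _ _).trans ?_
      rw [abs_mul, abs_mul, abs_of_pos d2, abs_of_nonneg C2n]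
      nlinarith [abs_nonneg ((g1.D : ℝ) - g2.D)]
    have e3 : Del * g1.D * g2.D ≤ (|(g1.C : ℝ) - g2.C| + |(g1.D : ℝ) - g2.D|) * g2.D := by
      refine le_trans ?_ e2
      rw [mul_assoc]
      gcongr
    have := le_of_mul_le_mul_right e3 d2
    linarith
  obtain ⟨c, hc⟩ := linlow (al := (g1.C : ℝ) - g2.C) (be := (g1.D : ℝ) - g2.D) (by positivity) hdet hr0 hr
  set lam := |h| * (n / Dg ^ 2 * rho * Del) / (24 * P ^ 2) with hlam
  have hh0 : 0 < |h| := by linarith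
  have lpos : 0 < lam := by positivity
  have main := osc2 (F := fun x => h * n * (g1.ev x - g2.ev x))
    (F1 := fun x => h * n * ((L1 x ^ 2)⁻¹ - (L2 x ^ 2)⁻¹))
    (F2 := fun x => h * n * (-(2 * g1.C) / L1 x ^ 3 + (2 * g2.C) / L2 x ^ 3))
    (c := c) (rho := rho) (lam := lam) (M := 4 * |h| * (n / Dg ^ 2)) hr0.le ?_ ?_ ?_ lpos ?_ ?_
  · refine main.trans ?_
    have q1 : 1 / lam ≤ 24 * P ^ 2 / (n / Dg ^ 2 * rho * Del) := by
      rw [hlam, one_div_div]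
      exact div_le_div_of_nonneg_left (by positivity) (by positivity)
        (le_mul_of_one_le_left (by positivity) hh)
    have q2 : 4 * |h| * (n / Dg ^ 2) / lam ^ 2 ≤ 2304 * P ^ 4 / (n / Dg ^ 2 * rho ^ 2 * Del ^ 2) := by
      have : 4 * |h| * (n / Dg ^ 2) / lam ^ 2
          = (2304 * P ^ 4 / (n / Dg ^ 2 * rho ^ 2 * Del ^ 2)) / |h| := by
        rw [hlam]; field_simp; ring
      rw [this]
      exact div_le_self (by positivity) hh
    linarith
  · intro x hx
    exact ((dev g1 h1 x hx).sub (dev g2 h2 x hx)).const_mul (h * n)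
  · intro x hx
    have p1 : 0 < L1 x := d1.trans_le (L1l x hx)
    have p2 : 0 < L2 x := d2.trans_le (L2l x hx)
    have a1 := ((dL1 x).pow 2).inv (by simpa using (pow_pos p1 2).ne')
    have a2 := ((dL2 x).pow 2).inv (by simpa using (pow_pos p2 2).ne')
    have := (a1.sub a2).const_mul (h * n)
    refine this.congr_deriv ?_
    simp only [Pi.pow_apply]
    field_simp
    push_cast
    ring
  · apply ContinuousOn.mul continuousOn_const
    apply ContinuousOn.add
    · refine ContinuousOn.div continuousOn_const (Continuous.continuousOn (by simp only [hL1]; fun_prop)) ?_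
      intro x hx
      exact (pow_pos (d1.trans_le (L1l x hx)) 3).ne'
    · refine ContinuousOn.div continuousOn_const (Continuous.continuousOn (by simp only [hL2]; fun_prop)) ?_
      intro x hx
      exact (pow_pos (d2.trans_le (L2l x hx)) 3).ne'
  · intro x hx hxc
    have p1 : 0 < L1 x := d1.trans_le (L1l x hx)
    have p2 : 0 < L2 x := d2.trans_le (L2l x hx)
    have hl := hc x hx hxc
    have e : (L1 x ^ 2)⁻¹ - (L2 x ^ 2)⁻¹ = -((((g1.C : ℝ) - g2.C) * x + (g1.D - g2.D)) *
        ((L1 x + L2 x) / (L1 x ^ 2 * L2 x ^ 2))) := by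
      have : ((g1.C : ℝ) - g2.C) * x + (g1.D - g2.D) = L1 x - L2 x := by simp only [hL1, hL2]; ring
      rw [this]; field_simp; ring
    rw [e, abs_mul, abs_neg, abs_mul, abs_mul, abs_of_pos hn,
      abs_of_pos (by positivity : 0 < (L1 x + L2 x) / (L1 x ^ 2 * L2 x ^ 2))]
    have f1 : 1 / (2 * g1.D * (2 * (Dg * P)) ^ 2) ≤ (L1 x + L2 x) / (L1 x ^ 2 * L2 x ^ 2) := by
      calc 1 / (2 * g1.D * (2 * (Dg * P)) ^ 2) ≤ 1 / (L1 x * L2 x ^ 2) := by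
            have := L1u x hx
            have := (L2u x hx).trans (mul_le_mul_of_nonneg_left hP2 zero_le_two)
            gcongr
        _ = L1 x / (L1 x ^ 2 * L2 x ^ 2) := by field_simp
        _ ≤ _ := by gcongr; linarith
    calc lam = |h| * n * (rho * (g1.D * Del) / 3 * (1 / (2 * g1.D * (2 * (Dg * P)) ^ 2))) := by
          rw [hlam]; field_simp; ring
      _ ≤ _ := by gcongr
  · intro x hx
    have p1 : 0 < L1 x := d1.trans_le (L1l x hx)
    have p2 : 0 < L2 x := d2.trans_le (L2l x hx)
    have key : ∀ (C D L : ℝ), 0 ≤ C → C ≤ D → Dg ≤ D → D ≤ L → C / L ^ 3 ≤ 1 / Dg ^ 2 := by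
      intro C D L c0 c1 c2 c3
      have : 0 < L := by linarith
      rw [div_le_div_iff₀ (by positivity) (by positivity), one_mul]
      calc C * Dg ^ 2 ≤ L * L ^ 2 := by gcongr <;> linarith
        _ = L ^ 3 := by ring
    have k1 := key g1.C g1.D (L1 x) C1n C1 hg1 (L1l x hx)
    have k2 := key g2.C g2.D (L2 x) C2n C2 hg2 (L2l x hx)
    have k3 : 0 ≤ (g1.C : ℝ) / L1 x ^ 3 := by positivity
    have k4 : 0 ≤ (g2.C : ℝ) / L2 x ^ 3 := by positivity
    rw [abs_mul, abs_mul, abs_of_pos hn]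
    have k5 : |(-(2 * (g1.C : ℝ)) / L1 x ^ 3 + (2 * g2.C) / L2 x ^ 3)| ≤ 4 * (1 / Dg ^ 2) := by
      rw [neg_div, mul_div_assoc, mul_div_assoc, abs_le]
      constructor <;> nlinarith
    calc |h| * n * _ ≤ |h| * n * (4 * (1 / Dg ^ 2)) := by gcongr
      _ = _ := by ring

end Tw


namespace Tw

theorem dni_nonneg (x : ℝ) : 0 ≤ dni x := abs_nonneg _

theorem dni_le (x y : ℝ) : dni x ≤ |x - y| + dni y := by
  have h := round_le x (round y)
  have := abs_sub_le x y (round y)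
  unfold dni
  linarith

theorem ee_sub_one (t : ℝ) : 4 * dni t ≤ ‖ee t - 1‖ := by
  set r := t - round t with hr
  have h1 : ee t = ee r := by
    have : t = r + (round t : ℤ) := by rw [hr]; ring
    rw [this, ee_add, ee_int, mul_one]
  have h2 : |r| ≤ 1 / 2 := abs_sub_round t
  have h3 : dni t = |r| := rfl
  have h4 : ee r = Complex.exp (Complex.I * (2 * π * r : ℝ)) := by
    simp only [ee]; rw [mul_comm]
  rw [h1, h3, h4, Complex.norm_exp_I_mul_ofReal_sub_one]
  have h5 : 2 * π * r / 2 = π * r := by ring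
  have h6 : |sin (π * r)| = sin (π * |r|) := by
    rw [abs_sin_eq_sin_abs_of_abs_le_pi, abs_mul, abs_of_pos pi_pos]
    rw [abs_mul, abs_of_pos pi_pos]
    nlinarith [pi_pos]
  rw [h5, norm_mul, Real.norm_eq_abs, Real.norm_eq_abs, h6, abs_two]
  have h7 := Real.mul_le_sin (x := π * |r|) (by positivity) (by nlinarith [pi_pos])
  have h8 : 2 / π * (π * |r|) = 2 * |r| := by field_simp
  linarith

theorem ee_nat_mul (k : ℕ) (t : ℝ) : ee (k * t) = ee t ^ k := by
  induction k with
  | zero => simp [ee_zero]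
  | succ k ih => rw [pow_succ, ← ih, ← ee_add]; congr 1; push_cast; ring

theorem fejer {t eta : ℝ} (h0 : 0 < eta) (h : eta ≤ dni t) (H : ℕ) :
    ‖∑ k ∈ Finset.range H, ee (k * t)‖ ≤ 1 / (2 * eta) := by
  simp only [ee_nat_mul]
  have h1 := geom_sum_mul (ee t) H
  have h2 := congrArg norm h1
  rw [norm_mul] at h2
  have h3 : ‖ee t ^ H - 1‖ ≤ 2 := by
    refine (norm_sub_le _ _).trans ?_
    rw [norm_pow, norm_ee]; norm_num
  have h4 := ee_sub_one t
  rw [le_div_iff₀ (by positivity)]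
  have h5 := norm_nonneg (∑ i ∈ Finset.range H, ee t ^ i)
  nlinarith

/-- Abstract second moment estimate. -/
theorem l2 {ι : Type} [Fintype ι] [DecidableEq ι] (f : ι → ℝ → ℝ) (del eta eta1 : ℝ) (H : ℕ) (E : Set ℝ)
    (hE : MeasurableSet E) (hE1 : E ⊆ Set.Icc 0 1)
    (hf : ∀ i, ContinuousOn (f i) (Set.Icc 0 1))
    (he : 0 < eta) (hH : (1 / (2 * eta)) ^ 2 ≤ H / 2) (he1 : 0 ≤ eta1)
    (hmiss : ∀ x ∈ E, ∀ i, eta ≤ dni (f i x - del))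
    (hoff : ∀ h : ℤ, h ≠ 0 → ∀ i j, i ≠ j → ‖∫ x in (0:ℝ)..1, ee (h * (f i x - f j x))‖ ≤ eta1) :
    volume.real E * ((Fintype.card ι : ℝ) ^ 2 / 4) ≤
      (H : ℝ) ^ 2 * (Fintype.card ι + (Fintype.card ι : ℝ) ^ 2 * eta1) := by
  set W : ℝ := ((Fintype.card ι : ℕ) : ℝ) with hW
  set P : Finset (ℕ × ℕ) := (Finset.range H ×ˢ Finset.range H).filter (fun p => p.1 ≠ p.2) with hP
  have hPc : (P.card : ℝ) ≤ (H : ℝ) ^ 2 := by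
    have : P.card ≤ (Finset.range H ×ˢ Finset.range H).card := Finset.card_filter_le _ _
    rw [Finset.card_product, Finset.card_range] at this
    calc (P.card : ℝ) ≤ ((H * H : ℕ) : ℝ) := by exact_mod_cast this
      _ = _ := by push_cast; ring
  set T : ℕ × ℕ → ℝ → ℂ := fun p x => ∑ i, ee (((p.1 : ℝ) - p.2) * (f i x - del)) with hT
  have cT : ∀ p, ContinuousOn (T p) (Set.Icc 0 1) := by
    intro p
    refine continuousOn_finsetSum _ (fun i _ => continuous_ee.comp_continuousOn ?_)
    exact continuousOn_const.mul ((hf i).sub continuousOn_const)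
  have cT2 : ∀ p, ContinuousOn (fun x => ‖T p x‖ ^ 2) (Set.Icc 0 1) := fun p => (cT p).norm.pow 2
  -- pointwise lower bound on E
  have hlow : ∀ x ∈ E, W ^ 2 / 4 ≤ ∑ p ∈ P, ‖T p x‖ ^ 2 := by
    intro x hx
    have a1 : ∑ p ∈ Finset.range H ×ˢ Finset.range H, T p x =
        ((∑ i, ‖∑ k ∈ Finset.range H, ee (k * (f i x - del))‖ ^ 2 : ℝ) : ℂ) := by
      simp only [hT]
      rw [Finset.sum_comm]
      push_cast
      refine Finset.sum_congr rfl (fun i _ => ?_)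
      rw [← Complex.mul_conj', map_sum, Finset.sum_mul_sum, Finset.sum_product]
      refine Finset.sum_congr rfl (fun k _ => Finset.sum_congr rfl (fun l _ => ?_))
      rw [ee_conj, ← ee_add]
      congr 1
      ring
    have a2 : (∑ i : ι, ‖∑ k ∈ Finset.range H, ee (k * (f i x - del))‖ ^ 2 : ℝ) ≤ W * (H / 2) := by
      calc _ ≤ ∑ i : ι, ((H : ℝ) / 2) := by
            refine Finset.sum_le_sum (fun i _ => le_trans ?_ hH)
            exact pow_le_pow_left₀ (norm_nonneg _) (fejer he (hmiss x hx i) H) 2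
        _ = _ := by simp [hW]
    have a3 : ∑ p ∈ Finset.range H ×ˢ Finset.range H, T p x = ∑ p ∈ P, T p x + (W * H : ℝ) := by
      rw [← Finset.sum_filter_add_sum_filter_not _ (fun p : ℕ × ℕ => p.1 ≠ p.2)]
      congr 1
      have : ∀ p ∈ (Finset.range H ×ˢ Finset.range H).filter (fun p : ℕ × ℕ => ¬ p.1 ≠ p.2),
          T p x = W := by
        intro p hp
        have : p.1 = p.2 := by simpa using (Finset.mem_filter.1 hp).2
        simp [hT, this, ee_zero, hW]
      rw [Finset.sum_congr rfl this, Finset.sum_const, nsmul_eq_mul]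
      have hc : ((Finset.range H ×ˢ Finset.range H).filter (fun p : ℕ × ℕ => ¬ p.1 ≠ p.2)).card = H := by
        have : ((Finset.range H ×ˢ Finset.range H).filter (fun p : ℕ × ℕ => ¬ p.1 ≠ p.2))
            = (Finset.range H).diag := by
          ext p; simp only [Finset.mem_filter, Finset.mem_product, Finset.mem_diag, not_not]
          constructor
          · rintro ⟨⟨h1, h2⟩, h3⟩; exact ⟨h1, h3⟩
          · rintro ⟨h1, h3⟩; exact ⟨⟨h1, h3 ▸ h1⟩, h3⟩
        rw [this, Finset.diag_card, Finset.card_range]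
      rw [hc]; push_cast; ring
    have a4 : W * (H / 2) ≤ ‖∑ p ∈ P, T p x‖ := by
      have : ∑ p ∈ P, T p x = (((∑ i, ‖∑ k ∈ Finset.range H, ee (k * (f i x - del))‖ ^ 2) - W * H : ℝ) : ℂ) := by
        rw [Complex.ofReal_sub, ← a1, a3]; ring
      rw [this, Complex.norm_real, Real.norm_eq_abs, abs_sub_comm]
      exact le_trans (by linarith) (le_abs_self _)
    have a5 : ‖∑ p ∈ P, T p x‖ ^ 2 ≤ P.card * ∑ p ∈ P, ‖T p x‖ ^ 2 := by
      refine (pow_le_pow_left₀ (norm_nonneg _) (norm_sum_le _ _) 2).trans ?_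
      exact sq_sum_le_card_mul_sum_sq
    have a6 : (0:ℝ) < H := by
      have : 0 < (1 / (2 * eta)) ^ 2 := by positivity
      linarith
    have a7 : 0 ≤ ∑ p ∈ P, ‖T p x‖ ^ 2 := Finset.sum_nonneg (fun _ _ => by positivity)
    have a8 : (W * (H / 2)) ^ 2 ≤ (H : ℝ) ^ 2 * ∑ p ∈ P, ‖T p x‖ ^ 2 :=
      ((pow_le_pow_left₀ (by positivity) a4 2).trans a5).trans (by gcongr)
    have a9 : (H : ℝ) ^ 2 * (W ^ 2 / 4) ≤ (H : ℝ) ^ 2 * ∑ p ∈ P, ‖T p x‖ ^ 2 := by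
      refine le_trans (le_of_eq ?_) a8; ring
    exact le_of_mul_le_mul_left a9 (by positivity)
  -- integrals
  have hint : ∀ p ∈ P, ∫ x in Set.Icc (0:ℝ) 1, ‖T p x‖ ^ 2 ≤ W + W ^ 2 * eta1 := by
    intro p hp
    have hne : ((p.1 : ℤ) - p.2) ≠ 0 := by
      have := (Finset.mem_filter.1 hp).2
      intro h; apply this; omega
    have b1 : ∀ x, ((‖T p x‖ ^ 2 : ℝ) : ℂ) =
        ∑ i, ∑ j, ee ((((p.1 : ℤ) - p.2 : ℤ) : ℝ) * (f i x - f j x)) := by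
      intro x
      push_cast
      rw [← Complex.mul_conj']
      simp only [hT]
      rw [map_sum, Finset.sum_mul_sum]
      refine Finset.sum_congr rfl (fun k _ => Finset.sum_congr rfl (fun l _ => ?_))
      rw [ee_conj, ← ee_add]
      congr 1
      ring
    have ci : ∀ i j, ContinuousOn (fun x => ee ((((p.1 : ℤ) - p.2 : ℤ) : ℝ) * (f i x - f j x))) (Set.uIcc 0 1) := by
      intro i j
      rw [Set.uIcc_of_le zero_le_one]
      exact continuous_ee.comp_continuousOn (continuousOn_const.mul ((hf i).sub (hf j)))
    have b2 : ((∫ x in (0:ℝ)..1, ‖T p x‖ ^ 2 : ℝ) : ℂ) =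
        ∑ i, ∑ j, ∫ x in (0:ℝ)..1, ee ((((p.1 : ℤ) - p.2 : ℤ) : ℝ) * (f i x - f j x)) := by
      rw [← intervalIntegral.integral_ofReal]
      simp only [b1]
      rw [intervalIntegral.integral_finsetSum]
      · refine Finset.sum_congr rfl (fun i _ => ?_)
        rw [intervalIntegral.integral_finsetSum]
        exact fun j _ => (ci i j).intervalIntegrable
      · exact fun i _ => (continuousOn_finsetSum _ (fun j _ => ci i j)).intervalIntegrable
    have b3 : ∀ i j, ‖∫ x in (0:ℝ)..1, ee ((((p.1 : ℤ) - p.2 : ℤ) : ℝ) * (f i x - f j x))‖ ≤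
        (if i = j then 1 else 0) + eta1 := by
      intro i j
      split_ifs with hij
      · subst hij
        simp only [sub_self, mul_zero, ee_zero]
        simpa using he1
      · rw [zero_add]; exact hoff _ hne i j hij
    rw [integral_Icc_eq_integral_Ioc, ← intervalIntegral.integral_of_le zero_le_one]
    have b4 : ‖((∫ x in (0:ℝ)..1, ‖T p x‖ ^ 2 : ℝ) : ℂ)‖ ≤ W + W ^ 2 * eta1 := by
      rw [b2]
      calc _ ≤ ∑ i, ∑ j, ((if i = j then (1:ℝ) else 0) + eta1) := by
            refine (norm_sum_le _ _).trans (Finset.sum_le_sum (fun i _ => ?_))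
            exact (norm_sum_le _ _).trans (Finset.sum_le_sum (fun j _ => b3 i j))
        _ = _ := by
            simp [Finset.sum_add_distrib, hW]
            ring
    rw [Complex.norm_real] at b4
    exact (le_abs_self _).trans b4
  have iT : ∀ p, IntegrableOn (fun x => ‖T p x‖ ^ 2) (Set.Icc 0 1) := fun p =>
    (cT2 p).integrableOn_Icc
  have iS : IntegrableOn (fun x => ∑ p ∈ P, ‖T p x‖ ^ 2) (Set.Icc 0 1) :=
    integrable_finsetSum _ (fun p _ => iT p)
  have hEfin : volume E ≠ ⊤ := ((measure_mono hE1).trans_lt (by simp)).ne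
  calc volume.real E * (W ^ 2 / 4) = ∫ x in E, (W ^ 2 / 4) := by
        rw [setIntegral_const, smul_eq_mul]
    _ ≤ ∫ x in E, ∑ p ∈ P, ‖T p x‖ ^ 2 :=
        setIntegral_mono_on (integrableOn_const hEfin) (iS.mono_set hE1) hE hlow
    _ ≤ ∫ x in Set.Icc (0:ℝ) 1, ∑ p ∈ P, ‖T p x‖ ^ 2 :=
        setIntegral_mono_set iS (ae_of_all _ (fun x => Finset.sum_nonneg (fun _ _ => by positivity)))
          (HasSubset.Subset.eventuallyLE hE1)
    _ = ∑ p ∈ P, ∫ x in Set.Icc (0:ℝ) 1, ‖T p x‖ ^ 2 := integral_finsetSum _ (fun p _ => iT p)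
    _ ≤ ∑ p ∈ P, (W + W ^ 2 * eta1) := Finset.sum_le_sum hint
    _ = P.card * (W + W ^ 2 * eta1) := by rw [Finset.sum_const, nsmul_eq_mul]
    _ ≤ _ := by gcongr

end Tw


namespace Tw
namespace Sys
variable (S : Sys)

theorem _root_.Tw.Mb.Gd.ev_cont {g : Mb} (hg : g.Gd) : ContinuousOn g.ev (Set.Icc 0 1) := by
  unfold Mb.ev
  refine ContinuousOn.div (by fun_prop) (by fun_prop) ?_
  intro x hx
  exact (Mb.den_pos hg hx.1).ne'

/-- The union of the cylinders of generation `b`. -/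
noncomputable def EE (b : ℕ) : Set ℝ :=
  ⋃ v : List.Vector (Fin S.M) b, Set.uIcc (S.ew v.toList 0) (S.ew v.toList 1)

theorem cyl_sub (l : List (Fin S.M)) :
    Set.uIcc (S.ew l 0) (S.ew l 1) ⊆ S.ew l '' Set.Icc 0 1 := by
  have h := (S.fd_Gd Mb.one_Gd l).ev_cont
  rw [← Set.uIcc_of_le (zero_le_one (α := ℝ))] at h
  have h2 := intermediate_value_uIcc h
  rw [S.ew_eq l (by simp), S.ew_eq l (by simp)]
  refine h2.trans ?_
  rw [Set.uIcc_of_le (zero_le_one (α := ℝ))]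
  rintro _ ⟨y, hy, rfl⟩
  exact ⟨y, hy, S.ew_eq l hy⟩

theorem EE_meas (b : ℕ) : MeasurableSet (S.EE b) :=
  MeasurableSet.iUnion (fun _ => measurableSet_uIcc)

theorem EE_sub (b : ℕ) : S.EE b ⊆ Set.Icc 0 1 := by
  refine Set.iUnion_subset (fun v => (S.cyl_sub _).trans ?_)
  rintro _ ⟨y, hy, rfl⟩
  exact S.ew_mem _ hy

theorem EE_vol (b : ℕ) : (S.M : ℝ) ^ b / (4 * (S.Q : ℝ) ^ (2 * b)) ≤ volume.real (S.EE b) := by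
  have hQ := S.Qpos
  have hdis : Pairwise (Function.onFun Disjoint (fun v : List.Vector (Fin S.M) b =>
      Set.uIcc (S.ew v.toList 0) (S.ew v.toList 1))) := by
    intro v w hvw
    refine Set.disjoint_left.2 (fun x hx hx' => ?_)
    obtain ⟨y, hy, rfl⟩ := S.cyl_sub _ hx
    obtain ⟨z, hz, he⟩ := S.cyl_sub _ hx'
    have h1 := S.ew_sep v.toList w.toList (by simp) (fun h => hvw (Subtype.ext h)) y hy z hz
    rw [he, sub_self, abs_zero] at h1
    have : 0 < S.c0 / (S.Q : ℝ) ^ (2 * v.toList.length) := div_pos S.c0_pos (by positivity)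
    linarith
  have hle : ∀ v : List.Vector (Fin S.M) b, 1 / (4 * (S.Q : ℝ) ^ (2 * b)) ≤
      volume.real (Set.uIcc (S.ew v.toList 0) (S.ew v.toList 1)) := by
    intro v
    have hg := S.fd_Gd Mb.one_Gd v.toList
    have h0 : (0:ℝ) ∈ Set.Icc (0:ℝ) 1 := by simp
    have h1 : (1:ℝ) ∈ Set.Icc (0:ℝ) 1 := by simp
    rw [measureReal_def, Real.volume_interval, ENNReal.toReal_ofReal (abs_nonneg _),
      S.ew_eq _ h0, S.ew_eq _ h1]
    refine le_trans ?_ (ev_lip_low hg h1 h0)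
    have h2 : ((S.fd Mb.one v.toList).D : ℝ) ≤ (S.Q : ℝ) ^ b := by
      have := S.D_fd_le Mb.one_Gd v.toList
      simp only [Mb.one, List.Vector.toList_length, mul_one] at this
      exact_mod_cast this
    have h3 : (0:ℝ) < (S.fd Mb.one v.toList).D := by exact_mod_cast hg.D_pos
    rw [sub_zero, abs_one]
    calc 1 / (4 * (S.Q : ℝ) ^ (2 * b)) = 1 / (2 * (S.Q : ℝ) ^ b) ^ 2 := by
          rw [mul_pow, ← pow_mul, mul_comm b]; norm_num
      _ ≤ _ := by gcongr
  unfold EE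
  rw [measureReal_def, measure_iUnion hdis (fun _ => measurableSet_uIcc), tsum_fintype,
    ENNReal.toReal_sum (fun v _ => by rw [Real.volume_interval]; exact ENNReal.ofReal_ne_top)]
  calc _ = ∑ v : List.Vector (Fin S.M) b, 1 / (4 * (S.Q : ℝ) ^ (2 * b)) := by
        rw [Finset.sum_const, Finset.card_univ, card_vector, Fintype.card_fin, nsmul_eq_mul]
        push_cast; ring
    _ ≤ _ := Finset.sum_le_sum (fun v _ => hle v)

/-- The hit lemma. -/
theorem hit : ∃ J0 : ℕ, ∀ J, J0 ≤ J → ∀ g : Mb, g.Gd → ∀ n : ℕ,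
    S.Q ^ (56 * J) * g.D ^ 2 ≤ n → n ≤ S.Q ^ (56 * J + 2) * g.D ^ 2 → ∀ del : ℝ,
    ∃ w : List (Fin S.M), w.length = 68 * J ∧ ∀ y ∈ Set.Icc (0:ℝ) 1,
      dni (n * (S.fd g w).ev y - del) ≤ 1 / 2 ^ J := by
  set C1 : ℝ := 2 + 48 / S.c0 + 4608 / S.c0 ^ 2 with hC1
  have hc0 := S.c0_pos
  have hC1p : 0 < C1 := by positivity
  obtain ⟨J1, hJ1⟩ := exists_nat_gt (64 * (1 + C1))
  refine ⟨J1 + 1, fun J hJ g hg n hn1 hn2 del => ?_⟩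
  have hQ := S.Qpos
  have hQ4 : (4:ℝ) ≤ S.Q := by exact_mod_cast S.hQ4
  have hD : (1:ℝ) ≤ g.D := by exact_mod_cast hg.D_pos
  by_contra hno
  push Not at hno
  have hn1' : (S.Q : ℝ) ^ (56 * J) * (g.D : ℝ) ^ 2 ≤ n := by exact_mod_cast hn1
  have hn2' : (n : ℝ) ≤ (S.Q : ℝ) ^ (56 * J + 2) * (g.D : ℝ) ^ 2 := by exact_mod_cast hn2
  have hnpos : (0:ℝ) < n := lt_of_lt_of_le (by positivity) hn1'
  -- small diameters
  have hdiam : ∀ (w v : List (Fin S.M)), w.length = 4 * J → v.length = 64 * J →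
      (n : ℝ) * (1 / ((S.fd g (w ++ v)).D : ℝ) ^ 2) ≤ 1 / 2 ^ J / 2 := by
    intro w v hw hv
    have d1 : S.K ^ (64 * J) * g.D ≤ (S.fd g (w ++ v)).D := by
      refine le_trans ?_ (S.le_D_fd g (w ++ v))
      gcongr
      · have := S.K2; omega
      · rw [List.length_append, hw, hv]; omega
    have d2 : S.Q ^ (64 * J) * g.D ^ 2 ≤ (S.fd g (w ++ v)).D ^ 2 := by
      calc S.Q ^ (64 * J) * g.D ^ 2 ≤ (S.K ^ 2) ^ (64 * J) * g.D ^ 2 := by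
            gcongr; exact S.hKQ
        _ = (S.K ^ (64 * J) * g.D) ^ 2 := by rw [mul_pow, ← pow_mul, ← pow_mul, mul_comm 2]
        _ ≤ _ := by gcongr
    have d3 : (S.Q : ℝ) ^ (64 * J) * (g.D : ℝ) ^ 2 ≤ ((S.fd g (w ++ v)).D : ℝ) ^ 2 := by
      exact_mod_cast d2
    have d4 : (2:ℝ) ^ (J + 1) ≤ (S.Q : ℝ) ^ (8 * J - 2) := by
      calc (2:ℝ) ^ (J + 1) ≤ (S.Q : ℝ) ^ (J + 1) := by gcongr; linarith
        _ ≤ _ := pow_le_pow_right₀ (by linarith) (by omega)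
    have d5 : (0:ℝ) < ((S.fd g (w ++ v)).D : ℝ) ^ 2 := lt_of_lt_of_le (by positivity) d3
    rw [mul_one_div, div_div, ← pow_succ, div_le_div_iff₀ d5 (by positivity), one_mul]
    calc (n : ℝ) * 2 ^ (J + 1) ≤ ((S.Q : ℝ) ^ (56 * J + 2) * (g.D : ℝ) ^ 2) * (S.Q : ℝ) ^ (8 * J - 2) := by
          gcongr
      _ = (S.Q : ℝ) ^ (64 * J) * (g.D : ℝ) ^ 2 := by
          rw [mul_right_comm, ← pow_add]; congr 2; omega
      _ ≤ _ := d3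
  have hmiss : ∀ x ∈ S.EE (64 * J), ∀ w : List.Vector (Fin S.M) (4 * J),
      1 / 2 ^ J / 2 ≤ dni (n * (S.fd g w.toList).ev x - del) := by
    intro x hx w
    obtain ⟨v, hv⟩ := Set.mem_iUnion.1 hx
    obtain ⟨y, hy, rfl⟩ := S.cyl_sub _ hv
    rw [← S.ev_fd (S.fd_Gd hg _) _ hy, ← S.fd_append]
    obtain ⟨z, hz, hz2⟩ := hno (w.toList ++ v.toList) (by simp; omega)
    have h1 := dni_le (n * (S.fd g (w.toList ++ v.toList)).ev z - del)
      (n * (S.fd g (w.toList ++ v.toList)).ev y - del)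
    have h2 : |(n * (S.fd g (w.toList ++ v.toList)).ev z - del) -
      (n * (S.fd g (w.toList ++ v.toList)).ev y - del)| ≤ 1 / 2 ^ J / 2 := by
      refine le_trans ?_ (hdiam w.toList v.toList (by simp) (by simp))
      have e : (n * (S.fd g (w.toList ++ v.toList)).ev z - del) -
        (n * (S.fd g (w.toList ++ v.toList)).ev y - del) =
        n * ((S.fd g (w.toList ++ v.toList)).ev z - (S.fd g (w.toList ++ v.toList)).ev y) := by ring
      rw [e, abs_mul, abs_of_pos hnpos]
      gcongr
      exact ev_lip_up (S.fd_Gd hg _) hz hy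
    linarith
  set q : ℝ := (S.Q : ℝ) ^ (4 * J) with hq
  have hqp : 0 < q := by positivity
  have hq1 : 1 ≤ q := one_le_pow₀ (by linarith)
  have hoff : ∀ h : ℤ, h ≠ 0 → ∀ w w' : List.Vector (Fin S.M) (4 * J), w ≠ w' →
      ‖∫ x in (0:ℝ)..1, ee (h * (n * (S.fd g w.toList).ev x - n * (S.fd g w'.toList).ev x))‖ ≤
        C1 / q ^ 2 := by
    intro h hh w w' hww
    have r1 := S.rt_sep hg w.toList w'.toList (by simp) (fun h => hww (Subtype.ext h))
    have gD : ∀ u : List (Fin S.M), (g.D : ℝ) ≤ (S.fd g u).D := by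
      intro u
      have := S.le_D_fd g u
      have h2 : 1 ≤ S.K ^ u.length := Nat.one_le_pow _ _ (by have := S.K2; omega)
      have : g.D ≤ (S.fd g u).D := le_trans (Nat.le_mul_of_pos_left _ h2) this
      exact_mod_cast this
    have gP : ((S.fd g w'.toList).D : ℝ) ≤ g.D * q := by
      have := S.D_fd_le hg w'.toList
      rw [w'.toList_length] at this
      have h3 : ((S.fd g w'.toList).D : ℝ) ≤ (S.Q : ℝ) ^ (4 * J) * g.D := by exact_mod_cast this
      linarith
    have e : ∀ x, (h : ℝ) * (n * (S.fd g w.toList).ev x - n * (S.fd g w'.toList).ev x) =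
        h * n * ((S.fd g w.toList).ev x - (S.fd g w'.toList).ev x) := fun x => by ring
    simp only [e]
    have hh1 : 1 ≤ |(h : ℝ)| := by exact_mod_cast Int.one_le_abs hh
    have hr : (1 / q ^ 2) ≤ 1 := by
      rw [div_le_one (by positivity)]; exact one_le_pow₀ hq1
    have r2 : S.c0 / q ^ 2 ≤ |(S.fd g w.toList).rt - (S.fd g w'.toList).rt| := by
      refine le_trans (le_of_eq ?_) r1
      rw [hq, ← pow_mul, w.toList_length, mul_comm 2]
    refine (offdiag (S.fd_Gd hg _) (S.fd_Gd hg _) hnpos hh1 (by linarith) (gD _) (gD _) gP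
      (Del := S.c0 / q ^ 2) (by positivity) r2 (rho := 1 / q ^ 2) (by positivity) hr).trans ?_
    have tau : q ^ 14 ≤ (n : ℝ) / (g.D : ℝ) ^ 2 := by
      rw [le_div_iff₀ (by positivity), hq, ← pow_mul]
      refine le_trans (le_of_eq ?_) hn1'
      congr 2; ring
    have t1 : 24 * q ^ 2 / ((n : ℝ) / (g.D : ℝ) ^ 2 * (1 / q ^ 2) * (S.c0 / q ^ 2)) ≤ 24 / S.c0 / q ^ 2 := by
      calc _ ≤ 24 * q ^ 2 / (q ^ 14 * (1 / q ^ 2) * (S.c0 / q ^ 2)) := by gcongr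
        _ = 24 / S.c0 / q ^ 8 := by field_simp
        _ ≤ _ := by gcongr <;> first | exact hq1 | norm_num
    have t2 : 2304 * q ^ 4 / ((n : ℝ) / (g.D : ℝ) ^ 2 * (1 / q ^ 2) ^ 2 * (S.c0 / q ^ 2) ^ 2) ≤
        2304 / S.c0 ^ 2 / q ^ 2 := by
      calc _ ≤ 2304 * q ^ 4 / (q ^ 14 * (1 / q ^ 2) ^ 2 * (S.c0 / q ^ 2) ^ 2) := by gcongr
        _ = _ := by field_simp
    have t3 : C1 / q ^ 2 = 2 * (1 / q ^ 2) + 2 * (24 / S.c0 / q ^ 2 + 2304 / S.c0 ^ 2 / q ^ 2) := by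
      rw [hC1]; ring
    linarith
  have hH : (1 / (2 * ((1:ℝ) / 2 ^ J / 2))) ^ 2 ≤ ((2 ^ (2 * J + 1) : ℕ) : ℝ) / 2 := by
    have : (1 / (2 * ((1:ℝ) / 2 ^ J / 2))) = 2 ^ J := by field_simp
    rw [this]; push_cast
    rw [← pow_mul, mul_comm J, pow_succ (2:ℝ) (2 * J)]
    simp
  have main := l2 (ι := List.Vector (Fin S.M) (4 * J)) (fun w x => n * (S.fd g w.toList).ev x) del
    (1 / 2 ^ J / 2) (C1 / q ^ 2) (2 ^ (2 * J + 1)) (S.EE (64 * J)) (S.EE_meas _) (S.EE_sub _)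
    (fun w => continuousOn_const.mul (S.fd_Gd hg _).ev_cont) (by positivity) hH (by positivity)
    hmiss hoff
  rw [card_vector, Fintype.card_fin] at main
  push_cast at main
  set W : ℝ := (S.M : ℝ) ^ (4 * J) with hW
  have hM2 : (2:ℝ) ≤ S.M := by exact_mod_cast S.hM2
  have hWp : 0 < W := by positivity
  have hWq : W ≤ q ^ 2 := by
    have : (S.M : ℝ) ≤ (S.Q : ℝ) ^ 2 := by exact_mod_cast S.hMQ
    calc W ≤ ((S.Q : ℝ) ^ 2) ^ (4 * J) := by rw [hW]; gcongr
      _ = _ := by rw [hq, ← pow_mul, ← pow_mul, mul_comm 2]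
  have hv := S.EE_vol (64 * J)
  have e1 : (S.M : ℝ) ^ (64 * J) = W ^ 16 := by rw [hW, ← pow_mul]; congr 1; ring
  have e2 : (S.Q : ℝ) ^ (2 * (64 * J)) = q ^ 32 := by rw [hq, ← pow_mul]; congr 1; ring
  rw [e1, e2] at hv
  set Z : ℝ := 2 ^ (4 * J) with hZ
  have e3 : ((2:ℝ) ^ (2 * J + 1)) ^ 2 = 4 * Z := by rw [hZ, ← pow_mul]; rw [show (2 * J + 1) * 2 = 4 * J + 2 by ring, pow_add]; ring
  rw [e3] at main
  have hZp : 0 < Z := by positivity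
  have m1 : W ^ 16 / (4 * q ^ 32) * (W ^ 2 / 4) ≤ 4 * Z * (W * (1 + C1)) := by
    refine (mul_le_mul_of_nonneg_right hv (by positivity)).trans (main.trans ?_)
    gcongr
    have : W ^ 2 * (C1 / q ^ 2) ≤ W * C1 := by
      rw [mul_div_assoc', div_le_iff₀ (by positivity)]
      nlinarith [mul_le_mul_of_nonneg_left hWq (by positivity : 0 ≤ W * C1)]
    linarith
  have m2 : W ^ 17 ≤ 64 * (1 + C1) * Z * q ^ 32 := by
    have : W ^ 16 / (4 * q ^ 32) * (W ^ 2 / 4) = W * (W ^ 17 / (16 * q ^ 32)) := by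
      field_simp; ring
    rw [this] at m1
    have m3 : W * (W ^ 17 / (16 * q ^ 32)) ≤ W * (4 * Z * (1 + C1)) := by linarith
    have m4 := le_of_mul_le_mul_left m3 hWp
    rw [div_le_iff₀ (by positivity)] at m4
    linarith
  have m5 : q ^ 33 ≤ W ^ 17 := by
    have : (S.Q : ℝ) ^ 33 ≤ (S.M : ℝ) ^ 17 := by exact_mod_cast S.hM
    rw [hq, hW, ← pow_mul, ← pow_mul, mul_comm _ 33, mul_comm _ 17, pow_mul, pow_mul _ 17]
    exact pow_le_pow_left₀ (by positivity) this _
  have m6 : q ≤ 64 * (1 + C1) * Z := by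
    have : q * q ^ 32 ≤ 64 * (1 + C1) * Z * q ^ 32 := by
      refine le_trans (le_of_eq ?_) (m5.trans m2); ring
    exact le_of_mul_le_mul_right this (by positivity)
  have m7 : Z * Z ≤ q := by
    calc Z * Z = 4 ^ (4 * J) := by rw [hZ, ← mul_pow]; norm_num
      _ ≤ q := by rw [hq]; gcongr
  have m8 : Z ≤ 64 * (1 + C1) := le_of_mul_le_mul_right (m7.trans m6) hZp
  have m9 : (J : ℝ) ≤ Z := by
    rw [hZ]
    have h1 : J < 2 ^ J := Nat.lt_two_pow_self
    have h2 : 2 ^ J ≤ 2 ^ (4 * J) := Nat.pow_le_pow_right (by norm_num) (by omega)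
    exact_mod_cast (h1.le.trans h2)
  have m10 : (J1 : ℝ) ≤ J := by exact_mod_cast (by omega : J1 ≤ J)
  linarith

end Sys
end Tw


namespace Tw

/-- The index set. -/
def Tp (K : ℕ) : Finset (ℕ × ℕ) :=
  (Finset.Ioc 0 K ×ˢ Finset.Ioc K (2 * K)).filter (fun p => Nat.Coprime p.1 p.2)

theorem card_dvd (K d : ℕ) (hd : 0 < d) :
    ((Finset.Ioc K (2 * K)).filter (fun x => d ∣ x)).card ≤ K / d + 1 := by
  have h1 := Nat.Ioc_filter_dvd_card_eq_div (2 * K) d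
  have h2 := Nat.Ioc_filter_dvd_card_eq_div K d
  have h3 : Finset.Ioc 0 (2 * K) = Finset.Ioc 0 K ∪ Finset.Ioc K (2 * K) := by
    ext x; simp only [Finset.mem_union, Finset.mem_Ioc]; omega
  have h4 : Disjoint (Finset.Ioc 0 K) (Finset.Ioc K (2 * K)) := by
    rw [Finset.disjoint_left]; intro x; simp only [Finset.mem_Ioc]; omega
  rw [h3, Finset.filter_union, Finset.card_union_of_disjoint (Finset.disjoint_filter_filter h4), h2] at h1
  have h5 : 2 * K / d ≤ K / d + (K / d + 1) := by
    rw [← Nat.lt_succ_iff, Nat.div_lt_iff_lt_mul hd]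
    have := Nat.lt_div_mul_add (a := K) hd
    nlinarith
  omega

theorem card_Tp_up (K : ℕ) : (Tp K).card ≤ K ^ 2 := by
  refine (Finset.card_filter_le _ _).trans ?_
  rw [Finset.card_product, Nat.card_Ioc, Nat.card_Ioc, sq]
  apply le_of_eq; congr 1; omega

theorem sum_sq (K : ℕ) (hK : 2 ≤ K) :
    ∑ d ∈ Finset.Icc 2 K, 1 / (d : ℝ) ^ 2 ≤ (3 / 4 - 1 / (K : ℝ) : ℝ) := by
  induction K, hK using Nat.le_induction with
  | base => norm_num
  | succ n hn ih =>
    rw [← Finset.insert_Icc_right_eq_Icc_add_one (by omega), Finset.sum_insert (by simp)]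
    have : (2:ℝ) ≤ n := by exact_mod_cast hn
    push_cast
    have h : 1 / ((n : ℝ) + 1) ^ 2 ≤ 1 / (n : ℝ) - 1 / ((n : ℝ) + 1) := by
      rw [div_sub_div _ _ (by positivity) (by positivity), div_le_div_iff₀ (by positivity) (by positivity)]
      nlinarith
    linarith

theorem card_Tp_low : ∀ᶠ K : ℕ in atTop, (K : ℝ) ^ 2 / 8 ≤ (Tp K).card := by
  have hl : ∀ᶠ K : ℕ in atTop, Real.log K ≤ (1 / 16) * K := by
    have := (Real.isLittleO_log_id_atTop.comp_tendsto tendsto_natCast_atTop_atTop).bound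
      (by norm_num : (0:ℝ) < 1 / 16)
    filter_upwards [this] with K hK
    simp only [Function.comp, id, Real.norm_eq_abs, Nat.abs_cast] at hK
    exact (le_abs_self _).trans hK
  filter_upwards [hl, eventually_ge_atTop 16] with K hK hK16
  have hK16' : (16:ℝ) ≤ K := by exact_mod_cast hK16
  set P := Finset.Ioc 0 K ×ˢ Finset.Ioc K (2 * K) with hP
  have hPc : P.card = K ^ 2 := by
    rw [hP, Finset.card_product, Nat.card_Ioc, Nat.card_Ioc, sq]
    congr 1; omega
  have hsplit := Finset.card_filter_add_card_filter_not (s := P) (fun p => Nat.Coprime p.1 p.2)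
  have hsub : P.filter (fun p => ¬ Nat.Coprime p.1 p.2) ⊆ (Finset.Icc 2 K).biUnion
      (fun d => (Finset.Ioc 0 K).filter (fun x => d ∣ x) ×ˢ
        (Finset.Ioc K (2 * K)).filter (fun x => d ∣ x)) := by
    intro p hp
    obtain ⟨hp1, hp2⟩ := Finset.mem_filter.1 hp
    obtain ⟨h1, h2⟩ := Finset.mem_product.1 hp1
    have h1' := Finset.mem_Ioc.1 h1
    have g0 : 0 < Nat.gcd p.1 p.2 := Nat.gcd_pos_of_pos_left _ h1'.1
    have g1 : Nat.gcd p.1 p.2 ≠ 1 := hp2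
    have g2 : Nat.gcd p.1 p.2 ≤ p.1 := Nat.gcd_le_left _ h1'.1
    refine Finset.mem_biUnion.2 ⟨Nat.gcd p.1 p.2, Finset.mem_Icc.2 ⟨by omega, by omega⟩, ?_⟩
    refine Finset.mem_product.2 ⟨Finset.mem_filter.2 ⟨h1, Nat.gcd_dvd_left _ _⟩,
      Finset.mem_filter.2 ⟨h2, Nat.gcd_dvd_right _ _⟩⟩
  have hcard : ((P.filter (fun p => ¬ Nat.Coprime p.1 p.2)).card : ℝ) ≤
      ∑ d ∈ Finset.Icc 2 K, ((K : ℝ) ^ 2 * (1 / (d : ℝ) ^ 2) + K * (d : ℝ)⁻¹) := by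
    have h1 := (Finset.card_le_card hsub).trans Finset.card_biUnion_le
    calc _ ≤ ((∑ d ∈ Finset.Icc 2 K, ((Finset.Ioc 0 K).filter (fun x => d ∣ x) ×ˢ
        (Finset.Ioc K (2 * K)).filter (fun x => d ∣ x)).card : ℕ) : ℝ) := by exact_mod_cast h1
      _ ≤ _ := by
        push_cast
        refine Finset.sum_le_sum (fun d hd => ?_)
        have hd2 : 2 ≤ d := (Finset.mem_Icc.1 hd).1
        have hd0 : (0:ℝ) < d := by exact_mod_cast (by omega : 0 < d)
        rw [Finset.card_product, Nat.Ioc_filter_dvd_card_eq_div]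
        push_cast
        have a1 : ((K / d : ℕ) : ℝ) ≤ (K : ℝ) / d := Nat.cast_div_le
        have a2 : (((Finset.Ioc K (2 * K)).filter (fun x => d ∣ x)).card : ℝ) ≤ (K : ℝ) / d + 1 := by
          have : (((Finset.Ioc K (2 * K)).filter (fun x => d ∣ x)).card : ℝ) ≤ ((K / d + 1 : ℕ) : ℝ) := by
            exact_mod_cast card_dvd K d (by omega)
          push_cast at this
          linarith
        calc _ ≤ (K : ℝ) / d * ((K : ℝ) / d + 1) := by gcongr
          _ = _ := by field_simp
  rw [Finset.sum_add_distrib, ← Finset.mul_sum, ← Finset.mul_sum] at hcard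
  have hh : ∑ d ∈ Finset.Icc 2 K, (d : ℝ)⁻¹ ≤ Real.log K := by
    have h1 := harmonic_le_one_add_log K
    rw [harmonic_eq_sum_Icc] at h1
    push_cast at h1
    rw [← Finset.add_sum_Ioc_eq_sum_Icc (by omega : 1 ≤ K)] at h1
    have : Finset.Ioc 1 K = Finset.Icc 2 K := by ext; simp; omega
    rw [this] at h1
    norm_num at h1
    linarith
  have hs := sum_sq K (by omega)
  have hKp : (0:ℝ) < K := by linarith
  have hs2 : (K : ℝ) ^ 2 * ∑ d ∈ Finset.Icc 2 K, 1 / (d : ℝ) ^ 2 ≤ (K : ℝ) ^ 2 * (3 / 4) := by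
    gcongr
    have : 0 < 1 / (K : ℝ) := by positivity
    linarith
  have hs3 : (K : ℝ) * ∑ d ∈ Finset.Icc 2 K, (d : ℝ)⁻¹ ≤ K * ((1 / 16) * K) := by
    gcongr; linarith
  have hsR : ((Tp K).card : ℝ) + ((P.filter (fun p => ¬ Nat.Coprime p.1 p.2)).card : ℝ) = (K : ℝ) ^ 2 := by
    rw [hPc] at hsplit
    exact_mod_cast hsplit
  nlinarith

/-- Key separation. -/
theorem sepA {K p q a b p2 q2 a2 b2 : ℕ} (hK : 0 < K) (hq : K < q) (hq' : q ≤ 2 * K)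
    (hq2 : K < q2) (hq2' : q2 ≤ 2 * K) (h : q * b = p * a + 1) (h2 : q2 * b2 = p2 * a2 + 1)
    (hp : p ≤ q) (hb : b ≤ a) (hp2 : p2 ≤ q2) (hb2 : b2 ≤ a2) (hne : p * q2 ≠ p2 * q)
    {x y : ℝ} (hx : x ∈ Set.Icc (0:ℝ) 1) (hy : y ∈ Set.Icc (0:ℝ) 1) :
    1 / (648 * (K:ℝ) ^ 2) ≤ |(q * x + (a + 8 * q)) / ((p + 8 * q) * x + (b + 8 * (a + p) + 64 * q))
      - (q2 * y + (a2 + 8 * q2)) / ((p2 + 8 * q2) * y + (b2 + 8 * (a2 + p2) + 64 * q2))| := by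
  have key : ∀ (p q a b : ℕ) (x : ℝ), K < q → q * b = p * a + 1 → p ≤ q → b ≤ a → x ∈ Set.Icc (0:ℝ) 1 →
      ∃ u : ℝ, (q * x + (a + 8 * q)) / ((p + 8 * q) * x + (b + 8 * (a + p) + 64 * q)) = 1 / (8 + u) ∧
        0 ≤ u ∧ u ≤ 1 ∧ 0 ≤ u - (p : ℝ) / q ∧ u - (p : ℝ) / q ≤ 1 / (8 * (K:ℝ) ^ 2) := by
    intro p q a b x hq h hp hb hx
    have hqR : (K : ℝ) < q := by exact_mod_cast hq
    have hKR : (0:ℝ) < K := by exact_mod_cast hK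
    have hR : (q : ℝ) * b = p * a + 1 := by exact_mod_cast h
    have hpR : (p : ℝ) ≤ q := by exact_mod_cast hp
    have hbR : (b : ℝ) ≤ a := by exact_mod_cast hb
    have hq0 : (0:ℝ) < q := by linarith
    have hx0 := hx.1
    have d0 : (0:ℝ) < q * (8 + x) + a := by positivity
    refine ⟨(p * (8 + x) + b) / (q * (8 + x) + a), ?_, by positivity, ?_, ?_⟩
    · have : (8 + (p * (8 + x) + b) / (q * (8 + x) + a)) =
        ((p + 8 * q) * x + (b + 8 * (a + p) + 64 * q)) / (q * (8 + x) + a) := by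
        field_simp; ring
      rw [this, one_div_div]; congr 1; ring
    · rw [div_le_one d0]; gcongr
    · have e : (p * (8 + x) + b) / (q * (8 + x) + a) - (p : ℝ) / q = 1 / (q * (q * (8 + x) + a)) := by
        rw [div_sub_div _ _ d0.ne' hq0.ne', div_eq_div_iff (by positivity) (by positivity)]
        linear_combination ((q : ℝ) * (q * (8 + x) + a)) * hR
      rw [e]
      refine ⟨by positivity, ?_⟩
      apply one_div_le_one_div_of_le (by positivity)
      have : (0:ℝ) ≤ a := by positivity
      calc 8 * (K:ℝ) ^ 2 = K * (K * 8) := by ring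
        _ ≤ q * (q * (8 + x) + a) := by
          gcongr
          have : (K:ℝ) * 8 ≤ q * (8 + x) := by gcongr; linarith
          linarith
  obtain ⟨u, e1, u0, u1, u2, u3⟩ := key p q a b x hq h hp hb hx
  obtain ⟨v, e2, v0, v1, v2, v3⟩ := key p2 q2 a2 b2 y hq2 h2 hp2 hb2 hy
  have hKR : (0:ℝ) < K := by exact_mod_cast hK
  have hqR : (K : ℝ) < q := by exact_mod_cast hq
  have hq2R : (K : ℝ) < q2 := by exact_mod_cast hq2
  have hqR' : (q : ℝ) ≤ 2 * K := by exact_mod_cast hq'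
  have hq2R' : (q2 : ℝ) ≤ 2 * K := by exact_mod_cast hq2'
  have hq0 : (0:ℝ) < q := by linarith
  have hq20 : (0:ℝ) < q2 := by linarith
  have hfr : 1 / (4 * (K:ℝ) ^ 2) ≤ |(p : ℝ) / q - p2 / q2| := by
    have hI : (1:ℝ) ≤ |(p : ℝ) * q2 - q * p2| := by
      have : (1:ℤ) ≤ |(p : ℤ) * q2 - q * p2| := by
        apply Int.one_le_abs
        intro h0
        apply hne
        have : (p : ℤ) * q2 = p2 * q := by linarith
        exact_mod_cast this
      exact_mod_cast this
    rw [div_sub_div _ _ hq0.ne' hq20.ne', abs_div, abs_of_pos (mul_pos hq0 hq20)]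
    calc 1 / (4 * (K:ℝ) ^ 2) = 1 / ((2 * K) * (2 * K)) := by ring
      _ ≤ _ := by gcongr
  have huv : 1 / (8 * (K:ℝ) ^ 2) ≤ |u - v| := by
    have e : 1 / (4 * (K:ℝ) ^ 2) = 2 * (1 / (8 * (K:ℝ) ^ 2)) := by field_simp; norm_num
    rw [e] at hfr
    have h3 : |(u - (p : ℝ) / q) - (v - p2 / q2)| ≤ 1 / (8 * (K:ℝ) ^ 2) := by
      rw [abs_le]; constructor <;> linarith
    have h4 := abs_sub_abs_le_abs_sub ((p : ℝ) / q - p2 / q2) (-(u - v - ((p : ℝ) / q - p2 / q2)))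
    rw [abs_neg] at h4
    have e5 : (p : ℝ) / q - p2 / q2 - -(u - v - ((p : ℝ) / q - p2 / q2)) = u - v := by ring
    have e6 : u - v - ((p : ℝ) / q - p2 / q2) = (u - (p : ℝ) / q) - (v - p2 / q2) := by ring
    rw [e5, e6] at h4
    linarith
  rw [e1, e2, div_sub_div _ _ (by linarith) (by linarith), abs_div,
    abs_of_pos (by positivity : (0:ℝ) < (8 + u) * (8 + v))]
  have e7 : |1 * (8 + v) - (8 + u) * 1| = |u - v| := by rw [abs_sub_comm]; congr 1; ring
  rw [e7]
  calc 1 / (648 * (K:ℝ) ^ 2) = (1 / (8 * (K:ℝ) ^ 2)) / (9 * 9) := by field_simp; norm_num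
    _ ≤ _ := by gcongr <;> linarith

theorem exists_inv {p q : ℕ} (hp : 0 < p) (hpq : p < q) (hc : Nat.Coprime p q) :
    ∃ a b : ℕ, 0 < a ∧ a < q ∧ q * b = p * a + 1 ∧ b ≤ a ∧ b ≤ p := by
  obtain ⟨m, hm⟩ := Nat.exists_mul_mod_eq_one_of_coprime hc (by omega)
  set r := m % q with hr
  have hrq : r < q := Nat.mod_lt _ (by omega)
  have h1 : p * r % q = 1 := by rw [hr, Nat.mul_mod_mod]; exact hm.2
  have hr0 : 0 < r := by
    rcases Nat.eq_zero_or_pos r with h | h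
    · rw [h] at h1; simp at h1
    · exact h
  have hdv : q ∣ p * (q - r) + 1 := by
    have h2 := Nat.div_add_mod (p * r) q
    rw [h1] at h2
    refine ⟨p - p * r / q, ?_⟩
    have h3 : p * r / q ≤ p := by
      rw [← Nat.lt_succ_iff, Nat.div_lt_iff_lt_mul (by omega)]
      nlinarith
    zify [h3, hrq.le]
    zify at h2
    linear_combination h2
  obtain ⟨b, hb⟩ := hdv
  refine ⟨q - r, b, by omega, by omega, hb.symm, ?_, ?_⟩
  · have : q * b ≤ q * (q - r) := by
      rw [← hb]
      have : 0 < q - r := by omega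
      nlinarith
    exact Nat.le_of_mul_le_mul_left this (by omega)
  · have : q * b ≤ q * p := by
      rw [← hb]
      have : p * (q - r) + p * r = p * q := by rw [← mul_add]; congr 1; omega
      have : 1 ≤ p * r := Nat.mul_pos hp hr0
      nlinarith
    exact Nat.le_of_mul_le_mul_left this (by omega)

end Tw


namespace Tw

theorem exists_sys (s : ℝ) (hs0 : 0 ≤ s) (hs : s < 1) : ∃ S : Sys, (S.Q : ℝ) ^ (2 * s) ≤ S.M := by
  have hlim : ∀ᶠ K : ℕ in atTop, (8 * 324 ^ 2 : ℝ) ≤ (K : ℝ) ^ (2 - 2 * s) :=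
    ((tendsto_rpow_atTop (by linarith : 0 < 2 - 2 * s)).comp
      tendsto_natCast_atTop_atTop).eventually_ge_atTop _
  obtain ⟨K, hlow, hK1, hKs⟩ := (card_Tp_low.and
    ((eventually_ge_atTop (324 ^ 33 * 8 ^ 17)).and hlim)).exists
  have hKbig : 324 ≤ K := le_trans (by norm_num) hK1
  have hK0 : 0 < K := by omega
  have hKR : (0:ℝ) < K := by exact_mod_cast hK0
  have hmem : ∀ x : {x // x ∈ Tp K}, 0 < x.1.1 ∧ x.1.1 ≤ K ∧ K < x.1.2 ∧ x.1.2 ≤ 2 * K ∧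
      Nat.Coprime x.1.1 x.1.2 := by
    intro x
    have h := x.2
    simp only [Tp, Finset.mem_filter, Finset.mem_product, Finset.mem_Ioc] at h
    omega
  have hex : ∀ x : {x // x ∈ Tp K}, ∃ a b : ℕ, 0 < a ∧ a < x.1.2 ∧ x.1.2 * b = x.1.1 * a + 1 ∧
      b ≤ a ∧ b ≤ x.1.1 := by
    intro x
    obtain ⟨h1, h2, h3, h4, h5⟩ := hmem x
    exact exists_inv h1 (by omega) h5
  choose a b ha0 haq hdet hba hbp using hex
  set e := (Tp K).equivFin with he
  set u : {x // x ∈ Tp K} → Mb := fun x => ⟨x.1.2, a x + 8 * x.1.2, x.1.1 + 8 * x.1.2,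
    b x + 8 * (a x + x.1.1) + 64 * x.1.2⟩ with hu
  have huok : ∀ x, (u x).OK := by
    intro x
    have h := hdet x
    refine ⟨?_, ?_, ?_, ?_, ?_⟩ <;> simp only [hu]
    · zify at h ⊢
      linear_combination h
    all_goals omega
  have hcop : ∀ x : {x // x ∈ Tp K}, Nat.Coprime (a x) x.1.2 := by
    intro x
    have h := hdet x
    rw [Nat.coprime_iff_gcd_eq_one, ← Nat.dvd_one]
    have d1 : Nat.gcd (a x) x.1.2 ∣ x.1.2 * b x := (Nat.gcd_dvd_right _ _).mul_right _
    have d2 : Nat.gcd (a x) x.1.2 ∣ x.1.1 * a x := (Nat.gcd_dvd_left _ _).mul_left _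
    rw [h] at d1
    exact (Nat.dvd_add_right d2).1 d1
  have hfrac : ∀ p q p2 q2 : ℕ, 0 < q → 0 < q2 → Nat.Coprime p q → Nat.Coprime p2 q2 →
      p * q2 = p2 * q → p = p2 ∧ q = q2 := by
    intro p q p2 q2 h0 h02 h1 h2 h
    have e1 : q ∣ q2 := h1.symm.dvd_of_dvd_mul_left ⟨p2, by rw [h]; ring⟩
    have e2 : q2 ∣ q := h2.symm.dvd_of_dvd_mul_left ⟨p, by rw [← h]; ring⟩
    have e3 := Nat.dvd_antisymm e1 e2
    subst e3
    exact ⟨Nat.eq_of_mul_eq_mul_right h0 h, rfl⟩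
  have hc8 : (K:ℝ) ^ 2 ≤ 8 * (Tp K).card := by linarith
  have hc8N : K ^ 2 ≤ 8 * (Tp K).card := by exact_mod_cast hc8
  refine ⟨⟨(Tp K).card, K, 324 * K, fun i => u (e.symm i), 1 / (648 * (K:ℝ) ^ 2), by positivity, 1 / 9,
    by norm_num, fun i => huok _, ?_, ?_, ?_, ?_, ?_, ?_, ?_, ?_, ?_, ?_⟩, ?_⟩
  · intro i
    obtain ⟨h1, h2, h3, h4, h5⟩ := hmem (e.symm i)
    simp only [hu]; omega
  · intro i
    obtain ⟨h1, h2, h3, h4, h5⟩ := hmem (e.symm i)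
    have := haq (e.symm i)
    have := hbp (e.symm i)
    simp only [hu]; omega
  · nlinarith
  · omega
  · nlinarith
  · have := card_Tp_up K
    nlinarith
  · have h1 : (K ^ 2) ^ 17 ≤ (8 * (Tp K).card) ^ 17 := Nat.pow_le_pow_left hc8N 17
    have h2 : 8 ^ 17 * (324 * K) ^ 33 ≤ 8 ^ 17 * (Tp K).card ^ 17 := by
      calc 8 ^ 17 * (324 * K) ^ 33 = (324 ^ 33 * 8 ^ 17) * K ^ 33 := by rw [mul_pow]; ring
        _ ≤ K * K ^ 33 := Nat.mul_le_mul_right _ hK1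
        _ = (K ^ 2) ^ 17 := by ring
        _ ≤ _ := h1
        _ = _ := by rw [mul_pow]
    exact Nat.le_of_mul_le_mul_left h2 (by positivity)
  · intro i x hx
    obtain ⟨h1, h2, h3, h4, h5⟩ := hmem (e.symm i)
    have hx0 := hx.1
    simp only [hu, Mb.ev]
    push_cast
    have q0 : (0:ℝ) < (e.symm i).1.2 := by exact_mod_cast (by omega : 0 < (e.symm i).1.2)
    have r1 : ((e.symm i).1.1 : ℝ) ≤ (e.symm i).1.2 := by exact_mod_cast (by omega)
    have r2 : (b (e.symm i) : ℝ) ≤ a (e.symm i) := by exact_mod_cast hba _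
    rw [div_le_div_iff₀ (by norm_num) (by positivity)]
    nlinarith
  · intro i j hij x hx y hy
    obtain ⟨h1, h2, h3, h4, h5⟩ := hmem (e.symm i)
    obtain ⟨k1, k2, k3, k4, k5⟩ := hmem (e.symm j)
    simp only [hu, Mb.ev]
    push_cast
    refine sepA hK0 h3 h4 k3 k4 (hdet _) (hdet _) (by omega) (hba _) (by omega) (hba _) ?_ hx hy
    intro h
    obtain ⟨f1, f2⟩ := hfrac _ _ _ _ (by omega) (by omega) h5 k5 h
    exact hij (e.symm.injective (Subtype.ext (Prod.ext f1 f2)))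
  · intro i j hij x hx y hy
    obtain ⟨h1, h2, h3, h4, h5⟩ := hmem (e.symm i)
    obtain ⟨k1, k2, k3, k4, k5⟩ := hmem (e.symm j)
    simp only [hu, Mb.ev, Mb.tr]
    push_cast
    have d1 := hdet (e.symm i)
    have d2 := hdet (e.symm j)
    have := sepA (p := a (e.symm i)) (a := (e.symm i).1.1) (p2 := a (e.symm j)) (a2 := (e.symm j).1.1)
      hK0 h3 h4 k3 k4 (by rw [d1]; ring) (by rw [d2]; ring) (haq _).le (hbp _) (haq _).le (hbp _) ?_ hx hy
    · rw [add_comm ((e.symm i).1.1 : ℝ) (a (e.symm i)), add_comm ((e.symm j).1.1 : ℝ) (a (e.symm j))] at this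
      exact this
    · intro h
      obtain ⟨f1, f2⟩ := hfrac _ _ _ _ (by omega) (by omega) (hcop _) (hcop _) h
      apply hij
      apply e.symm.injective
      have f3 : (e.symm i).1.1 = (e.symm j).1.1 := by
        have d3 : ((e.symm i).1.2 : ℤ) ∣ ((e.symm i).1.1 - (e.symm j).1.1 : ℤ) * a (e.symm i) := by
          refine ⟨b (e.symm i) - b (e.symm j), ?_⟩
          rw [← f2, ← f1] at d2
          zify at d1 d2
          linear_combination d2 - d1
        have d4 := (Int.isCoprime_iff_gcd_eq_one.2 (by
          simpa [Int.gcd_natCast_natCast] using (hcop (e.symm i)).symm) :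
          IsCoprime ((e.symm i).1.2 : ℤ) (a (e.symm i) : ℤ)).dvd_of_dvd_mul_right d3
        have d5 := Int.eq_zero_of_abs_lt_dvd d4 (by rw [abs_lt]; omega)
        omega
      exact Subtype.ext (Prod.ext f3 f2)
  · push_cast
    have h1 : (324 * (K:ℝ)) ^ (2 * s) ≤ 324 ^ 2 * (K:ℝ) ^ (2 * s) := by
      rw [Real.mul_rpow (by norm_num) hKR.le]
      gcongr
      rw [← Real.rpow_two]
      exact Real.rpow_le_rpow_of_exponent_le (by norm_num) (by linarith)
    have h2 : (K:ℝ) ^ (2 * s) * (K:ℝ) ^ (2 - 2 * s) = (K:ℝ) ^ 2 := by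
      rw [← Real.rpow_add hKR, ← Real.rpow_two]; congr 1; ring
    have h3 : (K:ℝ) ^ (2 * s) * (8 * 324 ^ 2) ≤ (K:ℝ) ^ (2 * s) * (K:ℝ) ^ (2 - 2 * s) := by gcongr
    linarith

end Tw


namespace Tw

theorem contsAux_int (v : ℝ) (n : ℕ) : ∃ a b : ℤ, (GenContFract.of v).contsAux n = ⟨(a : ℝ), (b : ℝ)⟩ := by
  induction n using Nat.strong_induction_on with
  | _ n ih =>
    match n with
    | 0 => exact ⟨1, 0, by simp [GenContFract.contsAux]⟩
    | 1 => exact ⟨⌊v⌋, 1, by simp [GenContFract.contsAux, GenContFract.of_h_eq_floor]⟩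
    | n + 2 =>
      obtain ⟨a1, b1, e1⟩ := ih n (by omega)
      obtain ⟨a2, b2, e2⟩ := ih (n + 1) (by omega)
      rcases h : (GenContFract.of v).s.get? n with _ | gp
      · refine ⟨a2, b2, ?_⟩
        rw [← e2]
        exact GenContFract.contsAux_stable_step_of_terminated h
      · obtain ⟨g1, z, g2⟩ := GenContFract.of_partNum_eq_one_and_exists_int_partDen_eq h
        refine ⟨z * a2 + a1, z * b2 + b1, ?_⟩
        rw [GenContFract.contsAux_recurrence h e1 e2, g1, g2]
        push_cast
        simp

theorem conv {α : ℝ} (hα : Irrational α) (t : ℕ) : ∃ (q : ℕ) (p : ℤ), (q : ℝ) = qden α t ∧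
    Nat.fib (t + 1) ≤ q ∧ IsCoprime p (q : ℤ) ∧ |α - p / q| ≤ 1 / (q : ℝ) ^ 2 := by
  have hnt : ∀ n, ¬ (GenContFract.of α).TerminatedAt n := by
    intro n hn
    obtain ⟨r, hr⟩ := (GenContFract.terminates_iff_rat α).1 ⟨n, hn⟩
    exact hα ⟨r, hr.symm⟩
  obtain ⟨p, q, e⟩ := contsAux_int α (t + 1)
  obtain ⟨p', q', e'⟩ := contsAux_int α (t + 1 + 1)
  have hq : (GenContFract.of α).dens t = q := by
    rw [GenContFract.den_eq_conts_b, GenContFract.nth_cont_eq_succ_nth_contAux, e]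
  have hp : (GenContFract.of α).nums t = p := by
    rw [GenContFract.num_eq_conts_a, GenContFract.nth_cont_eq_succ_nth_contAux, e]
  have hq' : (GenContFract.of α).dens (t + 1) = q' := by
    rw [GenContFract.den_eq_conts_b, GenContFract.nth_cont_eq_succ_nth_contAux, e']
  have hp' : (GenContFract.of α).nums (t + 1) = p' := by
    rw [GenContFract.num_eq_conts_a, GenContFract.nth_cont_eq_succ_nth_contAux, e']
  have hfib : ((Nat.fib (t + 1) : ℕ) : ℝ) ≤ q := by
    rw [← hq]; exact GenContFract.succ_nth_fib_le_of_nth_den (Or.inr (hnt _))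
  have hfibZ : ((Nat.fib (t + 1) : ℕ) : ℤ) ≤ q := by exact_mod_cast hfib
  have hfp : 0 < Nat.fib (t + 1) := Nat.fib_pos.2 (by omega)
  have hdet := SimpContFract.determinant (s := SimpContFract.of α) (n := t) (hnt t)
  have hdet2 : (p : ℝ) * q' - q * p' = (-1) ^ (t + 1) := by
    rw [← hp, ← hq, ← hp', ← hq']; exact hdet
  have hdetZ : p * q' - q * p' = (-1) ^ (t + 1) := by exact_mod_cast hdet2
  have hmono : (q : ℝ) ≤ q' := by rw [← hq, ← hq']; exact GenContFract.of_den_mono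
  have habs := GenContFract.abs_sub_convs_le (hnt t)
  rw [GenContFract.conv_eq_num_div_den, hp, hq, hq'] at habs
  obtain ⟨Q, rfl⟩ := Int.eq_ofNat_of_zero_le (by omega : 0 ≤ q)
  have hQ0 : (0:ℝ) < Q := by
    have : 0 < Q := by omega
    exact_mod_cast this
  refine ⟨Q, p, ?_, ?_, ?_, ?_⟩
  · rw [qden, hq]; simp
  · exact_mod_cast hfibZ
  · refine ⟨q' * (-1) ^ (t + 1), -p' * (-1) ^ (t + 1), ?_⟩
    have h1 : ((-1 : ℤ) ^ (t + 1)) * (-1) ^ (t + 1) = 1 := by rw [← mul_pow]; simp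
    linear_combination (-1) ^ (t + 1) * hdetZ + h1
  · simp only [Int.cast_natCast] at habs hmono
    refine habs.trans ?_
    rw [sq]
    gcongr

theorem inh1 {α : ℝ} (γ : ℝ) {q : ℕ} {p : ℤ} (hq : 0 < q) (hc : IsCoprime p (q : ℤ))
    (ha : |α - p / q| ≤ 1 / (q : ℝ) ^ 2) : ∃ n : ℕ, q ≤ n ∧ n < 2 * q ∧ (n : ℝ) * dni (n * α - γ) ≤ 5 := by
  obtain ⟨x, y, hxy⟩ := hc
  set m := round (q * γ) with hm
  have hqZ : (0:ℤ) < q := by exact_mod_cast hq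
  have hqR : (0:ℝ) < q := by exact_mod_cast hq
  set r := (m * x) % q with hr
  have r0 : 0 ≤ r := Int.emod_nonneg _ hqZ.ne'
  have r1 : r < q := Int.emod_lt_of_pos _ hqZ
  obtain ⟨R, hR⟩ := Int.eq_ofNat_of_zero_le r0
  have hdv : ∃ z : ℤ, ((R + q : ℕ) : ℤ) * p - m = q * z := by
    refine ⟨p - p * ((m * x) / q) - m * y, ?_⟩
    have h1 := Int.emod_add_mul_ediv (m * x) q
    rw [← hr, hR] at h1
    push_cast
    linear_combination p * h1 + m * hxy
  obtain ⟨z, hz⟩ := hdv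
  refine ⟨R + q, by omega, by omega, ?_⟩
  set n := R + q with hn
  have hn2 : (n : ℝ) ≤ 2 * q := by
    have : n ≤ 2 * q := by omega
    exact_mod_cast this
  have hzR : (n : ℝ) * p - m = q * z := by exact_mod_cast hz
  have h1 : dni (n * α - γ) ≤ |n * α - γ - z| := round_le _ _
  have h2 : n * α - γ - z = n * (α - p / q) + (m - q * γ) / q := by
    have : (z : ℝ) = (n * p - m) / q := by rw [hzR]; field_simp
    rw [this]; field_simp; ring
  have h3 : |n * (α - p / q)| ≤ 2 / q := by
    rw [abs_mul, Nat.abs_cast]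
    calc (n : ℝ) * |α - p / q| ≤ 2 * q * (1 / (q : ℝ) ^ 2) := by gcongr
      _ = 2 / q := by field_simp
  have h4 : |(m - q * γ) / q| ≤ 1 / 2 / q := by
    rw [abs_div, Nat.abs_cast, abs_sub_comm]
    gcongr
    exact abs_sub_round _
  have h5 : dni (n * α - γ) ≤ 5 / 2 / q := by
    refine h1.trans ?_
    rw [h2]
    refine (abs_add_le _ _).trans ?_
    calc _ ≤ 2 / (q : ℝ) + 1 / 2 / q := add_le_add h3 h4
      _ = _ := by ring
  calc (n : ℝ) * dni (n * α - γ) ≤ 2 * q * (5 / 2 / q) := by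
        gcongr; exact dni_nonneg _
    _ = 5 := by field_simp

theorem two_pow_le_fib (k : ℕ) : 2 ^ k ≤ Nat.fib (2 * k + 1) := by
  induction k with
  | zero => simp
  | succ k ih =>
    have h1 : Nat.fib (2 * (k + 1) + 1) = Nat.fib (2 * k + 1) + Nat.fib (2 * k + 2) := by
      rw [show 2 * (k + 1) + 1 = 2 * k + 1 + 2 by ring, Nat.fib_add_two]
    have h2 : Nat.fib (2 * k + 1) ≤ Nat.fib (2 * k + 2) := Nat.fib_le_fib_succ
    rw [pow_succ]; omega

theorem inh {α : ℝ} (hα : α ∈ KSet) (γ : ℝ) : ∃ c : ℕ, ∀ k : ℕ, ∃ n : ℕ, 2 ^ (2 ^ k) ≤ n ∧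
    Real.log n ≤ 2 ^ (c + k) ∧ (n : ℝ) * dni (n * α - γ) ≤ 5 := by
  obtain ⟨hirr, C, hC⟩ := hα
  obtain ⟨c, hc⟩ := pow_unbounded_of_one_lt (2 * (|C| + 1)) (one_lt_two)
  refine ⟨c, fun k => ?_⟩
  obtain ⟨q, p, h1, h2, h3, h4⟩ := conv hirr (2 * 2 ^ k)
  have h5 := two_pow_le_fib (2 ^ k)
  have h6 : 0 < q := lt_of_lt_of_le (by positivity) (h5.trans h2)
  obtain ⟨n, n1, n2, n3⟩ := inh1 γ h6 h3 h4
  refine ⟨n, (h5.trans h2).trans n1, ?_, n3⟩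
  have hqR : (0:ℝ) < q := by exact_mod_cast h6
  have hk1 : 1 ≤ 2 ^ k := Nat.one_le_two_pow
  have h7 := hC (2 * 2 ^ k) (by omega)
  rw [← h1, div_le_iff₀ (by positivity)] at h7
  have hn0 : (0:ℝ) < n := by exact_mod_cast (by omega : 0 < n)
  have h8 : Real.log n ≤ Real.log 2 + Real.log q := by
    rw [← Real.log_mul (by norm_num) hqR.ne']
    apply Real.log_le_log hn0
    exact_mod_cast n2.le
  have h9 : Real.log 2 ≤ 1 := by
    have := Real.log_two_lt_d9; linarith
  push_cast at h7
  have hkR : (1:ℝ) ≤ 2 ^ k := by exact_mod_cast hk1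
  have h10 : C * (2 * 2 ^ k) ≤ |C| * (2 * 2 ^ k) := by gcongr; exact le_abs_self C
  have h11 : 2 * (|C| + 1) * 2 ^ k ≤ 2 ^ c * 2 ^ k := by gcongr
  rw [pow_add]
  nlinarith

end Tw


namespace Tw
namespace Sys
variable (S : Sys)

theorem list_cut (b : ℕ) (hb : 1 ≤ b) (l : List (Fin S.M)) : b < (S.fd Mb.one l).D →
    ∃ l' r, l = l' ++ r ∧ b < (S.fd Mb.one l').D ∧ (S.fd Mb.one l').D ≤ S.Q * b := by
  induction l using List.reverseRecOn with
  | nil => intro h; simp [fd_nil, Mb.one] at h; omega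
  | append_singleton l a ih =>
    intro h
    by_cases h1 : b < (S.fd Mb.one l).D
    · obtain ⟨l', r, e, h2, h3⟩ := ih h1
      exact ⟨l', r ++ [a], by rw [e]; simp, h2, h3⟩
    · refine ⟨l ++ [a], [], by simp, h, ?_⟩
      rw [fd_snoc]
      exact (S.D_mul_le (S.fd_Gd Mb.one_Gd l) a).trans (Nat.mul_le_mul_left _ (not_lt.1 h1))

theorem approx_low {g : Mb} (hg : g.Gd) {y : ℝ} (hy : y ∈ Set.Icc (0:ℝ) 1) (b : ℕ) (hb : 1 ≤ b)
    (hbD : b < g.D) (a : ℤ) : 1 / (2 * g.D : ℝ) ≤ |b * g.ev y - a| := by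
  have hD := Mb.den_pos hg hy.1
  have hCD : (g.C : ℝ) ≤ g.D := by exact_mod_cast hg.hCD
  have hDp : (1:ℝ) ≤ g.D := by exact_mod_cast hg.D_pos
  have hC0 : (0:ℝ) ≤ g.C := by positivity
  set t : ℤ := b * g.A - a * g.C with ht
  set s : ℤ := a * g.D - b * g.B with hs
  have e1 : (g.C : ℤ) * s + g.D * t = b := by
    have := hg.det
    zify at this
    rw [ht, hs]; linear_combination (b:ℤ) * this
  have e2 : (b:ℝ) * g.ev y - a = (t * y - s) / (g.C * y + g.D) := by
    have hne := hD.ne'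
    rw [ht, hs, Mb.ev, eq_div_iff hne, sub_mul, mul_assoc, div_mul_cancel₀ _ hne]; push_cast; ring
  have hbD' : (b:ℤ) < g.D := by exact_mod_cast hbD
  have hb' : (1:ℤ) ≤ b := by exact_mod_cast hb
  have hC' : (0:ℤ) ≤ g.C := by positivity
  have hnum : (1:ℝ) ≤ |t * y - s| := by
    rcases lt_trichotomy t 0 with h | h | h
    · have hs1 : 1 ≤ s := by
        by_contra hc
        push Not at hc
        have : (g.C:ℤ) * s ≤ 0 := by nlinarith
        nlinarith
      have h1 : (1:ℝ) ≤ s := by exact_mod_cast hs1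
      have h2 : (t:ℝ) ≤ 0 := by exact_mod_cast h.le
      rw [abs_sub_comm, le_abs]; left; nlinarith [hy.1]
    · have hs1 : 1 ≤ s := by
        by_contra hc
        push Not at hc
        have : (g.C:ℤ) * s ≤ 0 := by nlinarith
        rw [h] at e1; nlinarith
      have h1 : (1:ℝ) ≤ s := by exact_mod_cast hs1
      rw [h, abs_sub_comm, le_abs]; left; simpa using h1
    · have hs1 : s ≤ -1 := by
        by_contra hc
        push Not at hc
        have : 0 ≤ (g.C:ℤ) * s := mul_nonneg hC' (by omega)
        nlinarith
      have h1 : (s:ℝ) ≤ -1 := by exact_mod_cast hs1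
      have h2 : (0:ℝ) ≤ t := by exact_mod_cast h.le
      rw [le_abs]; left; nlinarith [hy.1]
  rw [e2, abs_div, abs_of_pos hD]
  apply div_le_div₀ (by positivity) hnum hD
  nlinarith [hy.2]

theorem bad_of (X : ℝ) (h : ∀ N : ℕ, ∃ l, N < (S.fd Mb.one l).D ∧ ∃ y ∈ Set.Icc (0:ℝ) 1, X = S.ew l y) :
    X ∈ Bad := by
  have hQ := S.Qpos
  have key : ∀ b : ℕ, 1 ≤ b → 1 / (2 * S.Q : ℝ) ≤ b * dni (b * X) := by
    intro b hb
    obtain ⟨l, hl, y, hy, hX⟩ := h b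
    obtain ⟨l', r, rfl, h1, h2⟩ := S.list_cut b hb l hl
    rw [ew_append] at hX
    have hy' := S.ew_mem r hy
    rw [S.ew_eq l' hy'] at hX
    have h3 := approx_low (S.fd_Gd Mb.one_Gd l') hy' b hb h1 (round (b * X))
    rw [← hX] at h3
    have hb0 : (0:ℝ) < b := by exact_mod_cast hb
    have hD : ((S.fd Mb.one l').D : ℝ) ≤ S.Q * b := by exact_mod_cast h2
    have hD0 : (0:ℝ) < (S.fd Mb.one l').D := by exact_mod_cast (by omega : 0 < (S.fd Mb.one l').D)
    have h4 : 1 / (2 * (S.Q * b) : ℝ) ≤ dni (b * X) :=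
      le_trans (one_div_le_one_div_of_le (by positivity) (by linarith)) h3
    calc 1 / (2 * S.Q : ℝ) = b * (1 / (2 * (S.Q * b))) := by field_simp
      _ ≤ _ := by gcongr
  have freq : ∃ᶠ b : ℕ in atTop, (b:ℝ) * dni (b * X) ≤ 1 := by
    rw [Filter.frequently_atTop]
    intro N
    obtain ⟨l, hl, y, hy, hX⟩ := h N
    refine ⟨(S.fd Mb.one l).D, hl.le, ?_⟩
    have hg := S.fd_Gd Mb.one_Gd l
    rw [S.ew_eq l hy] at hX
    generalize S.fd Mb.one l = g at *
    have hD := Mb.den_pos hg hy.1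
    have hDp : (1:ℝ) ≤ g.D := by exact_mod_cast hg.D_pos
    have hd := Mb.detR hg
    have e : (g.D:ℝ) * X - g.B = y / (g.C * y + g.D) := by
      have hne := hD.ne'
      rw [hX, Mb.ev, eq_div_iff hne, sub_mul, mul_assoc, div_mul_cancel₀ _ hne]; linear_combination y * hd
    have h5 : dni (g.D * X) ≤ y / (g.C * y + g.D) := by
      have := round_le (g.D * X : ℝ) (g.B : ℤ)
      push_cast at this
      rw [e, abs_of_nonneg (div_nonneg hy.1 hD.le)] at this
      exact this
    calc (g.D:ℝ) * dni (g.D * X) ≤ g.D * (y / (g.C * y + g.D)) := by gcongr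
      _ ≤ 1 := by
        rw [← mul_div_assoc, div_le_one hD]
        have : 0 ≤ (g.C:ℝ) * y := mul_nonneg (by positivity) hy.1
        nlinarith [hy.2]
  rw [Bad, Set.mem_setOf_eq]
  refine lt_of_lt_of_le (show (0:ℝ) < 1 / (2 * S.Q : ℝ) by positivity) ?_
  refine le_liminf_of_le ?_ ?_
  · exact Filter.IsCoboundedUnder.of_frequently_le freq
  · filter_upwards [eventually_ge_atTop 1] with b hb using key b hb

end Sys
end Tw


namespace Tw

/-- The data driving the construction. -/
structure Dat (S : Sys) where
  n : ℕ → ℕ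
  J : ℕ → ℕ
  L : ℕ
  del : ℝ
  hw : ℕ → Mb → List (Fin S.M)
  hhw : ∀ i g, g.Gd → S.Q ^ (56 * J i) * g.D ^ 2 ≤ n i → n i ≤ S.Q ^ (56 * J i + 2) * g.D ^ 2 →
    (hw i g).length = 68 * J i ∧
      ∀ y ∈ Set.Icc (0:ℝ) 1, dni (n i * (S.fd g (hw i g)).ev y - del) ≤ 1 / 2 ^ (J i)
  h2 : ∀ i, S.Q ^ (56 * J (i + 1) + 136 * J i + 2) * n i ≤ n (i + 1)
  h3 : ∀ i, S.Q ^ (56 * J i + 2 + 2 * L * (∑ k ∈ Finset.range (i + 1), 68 * J k) +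
    2 * (∑ k ∈ Finset.range i, 68 * J k)) ≤ n i

namespace Dat
variable {S : Sys} (d : Dat S)

/-- Total length of forced words. -/
def F (i : ℕ) : ℕ := ∑ k ∈ Finset.range i, 68 * d.J k

theorem F_succ (i : ℕ) : d.F (i + 1) = d.F i + 68 * d.J i := by
  simp [F, Finset.sum_range_succ]

/-- denominators. -/
def DD (l : List (Fin S.M)) : ℕ := (S.fd Mb.one l).D

/-- Time to force. -/
def cond (p : List (Fin S.M) × ℕ) : Prop :=
  d.n p.2 ≤ S.Q ^ (56 * d.J p.2 + 2) * (DD p.1) ^ 2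

open Classical in
/-- Forcing. -/
noncomputable def pre (p : List (Fin S.M) × ℕ) : List (Fin S.M) × ℕ :=
  if d.cond p then (p.1 ++ d.hw p.2 (S.fd Mb.one p.1), p.2 + 1) else p

/-- State. -/
noncomputable def st (ω : ℕ → Fin S.M) : ℕ → List (Fin S.M) × ℕ
  | 0 => ([], 0)
  | k + 1 => ((d.pre (st ω k)).1 ++ [ω k], (d.pre (st ω k)).2)

/-- Invariant. -/
structure Inv (k : ℕ) (p : List (Fin S.M) × ℕ) : Prop where
  a : S.Q ^ (56 * d.J p.2) * (DD p.1) ^ 2 ≤ d.n p.2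
  b : p.1.length = k + d.F p.2
  c : d.L * d.F p.2 ≤ k

theorem DD_le (l : List (Fin S.M)) : DD l ≤ S.Q ^ l.length := by
  simpa [DD, Mb.one] using S.D_fd_le Mb.one_Gd l

theorem DD_ge (l : List (Fin S.M)) : 2 ^ l.length ≤ DD l := by
  have := S.le_D_fd Mb.one l
  have h2 := Nat.pow_le_pow_left S.K2 l.length
  simp [Mb.one] at this
  exact h2.trans this

theorem DD_app (l l' : List (Fin S.M)) : DD (l ++ l') ≤ S.Q ^ l'.length * DD l := by
  rw [DD, Sys.fd_append]
  exact S.D_fd_le (S.fd_Gd Mb.one_Gd l) l'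

theorem inv_zero : d.Inv 0 ([], 0) := by
  have h := d.h3 0
  have hQ : 0 < S.Q := by have := S.hQ4; omega
  refine ⟨?_, by simp [F], by simp [F]⟩
  simp only [DD, Sys.fd_nil, Mb.one, one_pow, mul_one]
  refine le_trans (Nat.pow_le_pow_right hQ ?_) h
  omega

theorem pre_inv {k p} (h : d.Inv k p) (a : Fin S.M) :
    S.Q ^ (56 * d.J (d.pre p).2) * (DD ((d.pre p).1 ++ [a])) ^ 2 ≤ d.n (d.pre p).2 ∧
    (d.pre p).1.length = k + d.F (d.pre p).2 ∧ d.L * d.F (d.pre p).2 ≤ k := by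
  have hQ : 0 < S.Q := by have := S.hQ4; omega
  have hQ1 : 1 < S.Q := by have := S.hQ4; omega
  obtain ⟨ha, hb, hc⟩ := h
  by_cases hcd : d.cond p
  · simp only [pre, hcd, if_true]
    have hh := d.hhw p.2 (S.fd Mb.one p.1) (S.fd_Gd Mb.one_Gd p.1) ha hcd
    refine ⟨?_, ?_, ?_⟩
    · have e := DD_app p.1 (d.hw p.2 (S.fd Mb.one p.1) ++ [a])
      rw [← List.append_assoc, List.length_append, hh.1, List.length_singleton] at e
      have hD : (DD p.1) ^ 2 ≤ d.n p.2 :=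
        le_trans (Nat.le_mul_of_pos_left _ (pow_pos hQ _)) ha
      calc S.Q ^ (56 * d.J (p.2 + 1)) * (DD (p.1 ++ d.hw p.2 (S.fd Mb.one p.1) ++ [a])) ^ 2
          ≤ S.Q ^ (56 * d.J (p.2 + 1)) * (S.Q ^ (68 * d.J p.2 + 1) * DD p.1) ^ 2 := by gcongr
        _ = S.Q ^ (56 * d.J (p.2 + 1) + 136 * d.J p.2 + 2) * (DD p.1) ^ 2 := by ring
        _ ≤ S.Q ^ (56 * d.J (p.2 + 1) + 136 * d.J p.2 + 2) * d.n p.2 := by gcongr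
        _ ≤ _ := d.h2 p.2
    · rw [List.length_append, hh.1, hb, F_succ]; ring
    · have h1 : d.n p.2 ≤ S.Q ^ (56 * d.J p.2 + 2 + 2 * (k + d.F p.2)) := by
        calc d.n p.2 ≤ S.Q ^ (56 * d.J p.2 + 2) * (DD p.1) ^ 2 := hcd
          _ ≤ S.Q ^ (56 * d.J p.2 + 2) * (S.Q ^ p.1.length) ^ 2 := by
            gcongr; exact DD_le p.1
          _ = _ := by rw [hb]; ring
      have h3 := (d.h3 p.2).trans h1
      rw [Nat.pow_le_pow_iff_right hQ1] at h3
      have e1 : ∑ k ∈ Finset.range (p.2 + 1), 68 * d.J k = d.F (p.2 + 1) := rfl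
      have e2 : ∑ k ∈ Finset.range p.2, 68 * d.J k = d.F p.2 := rfl
      rw [e1, e2] at h3
      nlinarith
  · simp only [pre, hcd, if_false]
    refine ⟨?_, hb, hc⟩
    have e := DD_app p.1 [a]
    rw [List.length_singleton, pow_one] at e
    have h1 : S.Q ^ (56 * d.J p.2 + 2) * (DD p.1) ^ 2 < d.n p.2 := not_le.1 hcd
    calc S.Q ^ (56 * d.J p.2) * (DD (p.1 ++ [a])) ^ 2
        ≤ S.Q ^ (56 * d.J p.2) * (S.Q * DD p.1) ^ 2 := by gcongr
      _ = S.Q ^ (56 * d.J p.2 + 2) * (DD p.1) ^ 2 := by ring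
      _ ≤ _ := h1.le

theorem st_inv (ω : ℕ → Fin S.M) (k : ℕ) : d.Inv k (d.st ω k) := by
  induction k with
  | zero => exact d.inv_zero
  | succ k ih =>
    obtain ⟨h1, h2, h3⟩ := d.pre_inv ih (ω k)
    refine ⟨h1, ?_, ?_⟩
    · simp only [st, List.length_append, h2, List.length_singleton]; ring
    · simp only [st]; omega

theorem pre_pref (p : List (Fin S.M) × ℕ) : ∃ r, (d.pre p).1 = p.1 ++ r := by
  by_cases hcd : d.cond p
  · exact ⟨d.hw p.2 (S.fd Mb.one p.1), by simp [pre, hcd]⟩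
  · exact ⟨[], by simp [pre, hcd]⟩

theorem st_pref (ω : ℕ → Fin S.M) (k : ℕ) : ∃ r, (d.st ω (k + 1)).1 = (d.st ω k).1 ++ r := by
  obtain ⟨r, hr⟩ := d.pre_pref (d.st ω k)
  exact ⟨r ++ [ω k], by simp [st, hr]⟩

theorem ew_cont (l : List (Fin S.M)) : ContinuousOn (S.ew l) (Set.Icc 0 1) :=
  (Mb.Gd.ev_cont (S.fd_Gd Mb.one_Gd l)).congr fun x hx => S.ew_eq l hx

theorem exists_X (ω : ℕ → Fin S.M) : ∃ x : ℝ, ∀ k, x ∈ S.ew (d.st ω k).1 '' Set.Icc 0 1 := by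
  have hc : ∀ k, IsCompact (S.ew (d.st ω k).1 '' Set.Icc (0:ℝ) 1) := fun k =>
    isCompact_Icc.image_of_continuousOn (ew_cont _)
  have := IsCompact.nonempty_iInter_of_sequence_nonempty_isCompact_isClosed
    (fun k => S.ew (d.st ω k).1 '' Set.Icc (0:ℝ) 1) ?_ ?_ (hc 0) (fun k => (hc k).isClosed)
  · obtain ⟨x, hx⟩ := this
    exact ⟨x, fun k => Set.mem_iInter.1 hx k⟩
  · rintro k _ ⟨y, hy, rfl⟩
    obtain ⟨r, hr⟩ := d.st_pref ω k
    rw [hr, Sys.ew_append]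
    exact ⟨_, S.ew_mem r hy, rfl⟩
  · exact fun k => ⟨_, 0, by simp, rfl⟩

/-- Limit point. -/
noncomputable def X (ω : ℕ → Fin S.M) : ℝ := (d.exists_X ω).choose

theorem X_mem (ω : ℕ → Fin S.M) (k : ℕ) : ∃ y ∈ Set.Icc (0:ℝ) 1, S.ew (d.st ω k).1 y = d.X ω :=
  (d.exists_X ω).choose_spec k

theorem X_pre (ω : ℕ → Fin S.M) (k : ℕ) : ∃ y ∈ Set.Icc (0:ℝ) 1,
    S.ew (d.pre (d.st ω k)).1 ((S.U (ω k)).ev y) = d.X ω := by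
  obtain ⟨y, hy, h⟩ := d.X_mem ω (k + 1)
  refine ⟨y, hy, ?_⟩
  rw [← h]
  simp [st, Sys.ew_append, Sys.ew_cons, Sys.ew_nil]

theorem DD_st (ω : ℕ → Fin S.M) (k : ℕ) : k < DD (d.st ω k).1 := by
  have h := DD_ge (d.st ω k).1
  rw [(d.st_inv ω k).b] at h
  have h1 : k + d.F (d.st ω k).2 < 2 ^ (k + d.F (d.st ω k).2) := Nat.lt_two_pow_self
  omega

theorem X_bad (ω : ℕ → Fin S.M) : d.X ω ∈ Bad := by
  refine S.bad_of _ fun N => ⟨(d.st ω N).1, d.DD_st ω N, ?_⟩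
  obtain ⟨y, hy, h⟩ := d.X_mem ω N
  exact ⟨y, hy, h.symm⟩

theorem reach (ω : ℕ → Fin S.M) (i : ℕ) (k0 : ℕ) (h0 : (d.st ω k0).2 = i) :
    ∃ k, (d.st ω k).2 = i ∧ d.cond (d.st ω k) := by
  by_contra hcon
  push Not at hcon
  have hall : ∀ m, (d.st ω (k0 + m)).2 = i := by
    intro m
    induction m with
    | zero => exact h0
    | succ m ih =>
      have := hcon _ ih
      rw [← add_assoc]
      simp [st, pre, this, ih]
  have h1 := hall (d.n i)
  have h2 := hcon _ h1
  apply h2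
  have h3 := d.DD_st ω (k0 + d.n i)
  rw [cond, h1]
  have hQ : 0 < S.Q := by have := S.hQ4; omega
  refine le_trans ?_ (Nat.le_mul_of_pos_left _ (pow_pos hQ _))
  nlinarith

theorem hits (ω : ℕ → Fin S.M) (i : ℕ) : ∃ k, (d.st ω k).2 = i ∧ d.cond (d.st ω k) := by
  induction i with
  | zero => exact d.reach ω 0 0 rfl
  | succ i ih =>
    obtain ⟨k, h1, h2⟩ := ih
    exact d.reach ω (i + 1) (k + 1) (by simp [st, pre, h2, h1])

theorem X_hit (ω : ℕ → Fin S.M) (i : ℕ) : dni (d.n i * d.X ω - d.del) ≤ 1 / 2 ^ (d.J i) := by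
  obtain ⟨k, h1, h2⟩ := d.hits ω i
  obtain ⟨y, hy, h⟩ := d.X_pre ω k
  have hy' := (S.ok (ω k)).ev_mem hy
  have hh := (d.hhw _ (S.fd Mb.one (d.st ω k).1) (S.fd_Gd Mb.one_Gd _) (d.st_inv ω k).a h2).2 _ hy'
  rw [S.ew_eq _ hy'] at h
  simp only [pre, h2, if_true, Sys.fd_append] at h
  rw [h, h1] at hh
  exact hh

theorem st_congr {ω ω' : ℕ → Fin S.M} {k : ℕ} (h : ∀ j < k, ω j = ω' j) : d.st ω k = d.st ω' k := by
  induction k with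
  | zero => rfl
  | succ k ih =>
    have := ih fun j hj => h j (by omega)
    simp [st, this, h k (by omega)]

theorem X_sep {ω ω' : ℕ → Fin S.M} {k : ℕ} (h : ∀ j < k, ω j = ω' j) (hk : ω k ≠ ω' k) :
    ∃ F : ℕ, d.L * F ≤ k ∧ S.c0 / (4 * (S.Q:ℝ) ^ (2 * (k + F))) ≤ |d.X ω - d.X ω'| := by
  obtain ⟨y, hy, e⟩ := d.X_pre ω k
  obtain ⟨y', hy', e'⟩ := d.X_pre ω' k
  rw [← d.st_congr h] at e'
  obtain ⟨-, h2, h3⟩ := d.pre_inv (d.st_inv ω k) (ω k)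
  refine ⟨_, h3, ?_⟩
  have m1 := (S.ok (ω k)).ev_mem hy
  have m2 := (S.ok (ω' k)).ev_mem hy'
  have hs := S.sep _ _ hk y hy y' hy'
  have hd := DD_le (d.pre (d.st ω k)).1
  rw [S.ew_eq _ m1] at e
  rw [S.ew_eq _ m2] at e'
  have hl := Sys.ev_lip_low (S.fd_Gd Mb.one_Gd (d.pre (d.st ω k)).1) m1 m2
  rw [e, e'] at hl
  refine le_trans ?_ hl
  rw [h2, DD] at hd
  have hd' : ((S.fd Mb.one (d.pre (d.st ω k)).1).D : ℝ) ≤ (S.Q:ℝ) ^ (k + d.F (d.pre (d.st ω k)).2) := by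
    exact_mod_cast hd
  have hp : (1:ℝ) ≤ (S.fd Mb.one (d.pre (d.st ω k)).1).D := by
    exact_mod_cast (S.fd_Gd Mb.one_Gd _).D_pos
  apply div_le_div₀ (abs_nonneg _) hs (by positivity)
  rw [mul_pow, pow_mul', show (2:ℝ) ^ 2 = 4 by norm_num]
  gcongr

end Dat
end Tw


namespace Tw
namespace Dat
variable {S : Sys} (d : Dat S)

theorem first_diff {ω ω' : ℕ → Fin S.M} (h : ω ≠ ω') : ∃ k, (∀ j < k, ω j = ω' j) ∧ ω k ≠ ω' k := by
  classical
  have hex : ∃ k, ω k ≠ ω' k := by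
    by_contra hc
    push Not at hc
    exact h (funext hc)
  refine ⟨Nat.find hex, fun j hj => ?_, Nat.find_spec hex⟩
  have := Nat.find_min hex hj
  push Not at this
  exact this

theorem X_inj : Function.Injective d.X := by
  intro ω ω' h
  by_contra hne
  obtain ⟨k, h1, h2⟩ := first_diff hne
  obtain ⟨F, -, h4⟩ := d.X_sep h1 h2
  rw [h, sub_self, abs_zero] at h4
  have := S.Qpos
  have := S.c0_pos
  have h5 : 0 < S.c0 / (4 * (S.Q:ℝ) ^ (2 * (k + F))) := by positivity
  linarith

theorem X_holder (s : ℝ) (hs : 0 < s) (hL : 1 ≤ d.L)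
    (hM : (S.Q:ℝ) ^ (2 * (1 + 1 / (d.L:ℝ)) * s) ≤ S.M) (ω ω' : ℕ → Fin S.M) :
    |Real.ofDigits ω - Real.ofDigits ω'| ≤ (4 / S.c0) ^ s * |d.X ω - d.X ω'| ^ s := by
  have hc := S.c0_pos
  by_cases hne : ω = ω'
  · subst hne
    simp only [sub_self, abs_zero]
    positivity
  obtain ⟨k, h1, h2⟩ := first_diff hne
  obtain ⟨F, h3, h4⟩ := d.X_sep h1 h2
  refine (Real.abs_ofDigits_sub_ofDigits_le h1).trans ?_
  have hQ := S.Qpos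
  have hQ1 : (1:ℝ) ≤ S.Q := by exact_mod_cast (by have := S.hQ4; omega : 1 ≤ S.Q)
  have hLp : (0:ℝ) < d.L := by exact_mod_cast hL
  have h3' : (F:ℝ) ≤ 1 / d.L * k := by
    rw [one_div, inv_mul_eq_div, le_div_iff₀ hLp]
    have : (d.L:ℝ) * F ≤ k := by exact_mod_cast h3
    linarith
  rw [← Real.mul_rpow (by positivity) (abs_nonneg _)]
  have h5 : ((S.Q:ℝ) ^ (2 * (k + F)))⁻¹ ≤ 4 / S.c0 * |d.X ω - d.X ω'| := by
    calc ((S.Q:ℝ) ^ (2 * (k + F)))⁻¹ = 4 / S.c0 * (S.c0 / (4 * (S.Q:ℝ) ^ (2 * (k + F)))) := by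
          field_simp
      _ ≤ _ := by gcongr
  refine le_trans ?_ (Real.rpow_le_rpow (by positivity) h5 hs.le)
  rw [Real.inv_rpow (by positivity)]
  apply inv_anti₀ (by positivity)
  rw [← Real.rpow_natCast, ← Real.rpow_mul hQ.le]
  calc (S.Q:ℝ) ^ (((2 * (k + F) : ℕ) : ℝ) * s) ≤ (S.Q:ℝ) ^ ((2 * (1 + 1 / (d.L:ℝ)) * s) * k) := by
        apply Real.rpow_le_rpow_of_exponent_le hQ1
        push_cast
        nlinarith
    _ = ((S.Q:ℝ) ^ (2 * (1 + 1 / (d.L:ℝ)) * s)) ^ k := by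
        rw [Real.rpow_mul hQ.le, Real.rpow_natCast]
    _ ≤ _ := by gcongr

theorem X_dim (s : ℝ) (hs : 0 < s) (hL : 1 ≤ d.L)
    (hM : (S.Q:ℝ) ^ (2 * (1 + 1 / (d.L:ℝ)) * s) ≤ S.M) :
    ENNReal.ofReal s ≤ dimH (Set.range d.X) := by
  set f : ℝ → ℝ := Function.extend d.X Real.ofDigits 0 with hf
  have hfX : ∀ ω, f (d.X ω) = Real.ofDigits ω := fun ω => d.X_inj.extend_apply _ _ ω
  have hc := S.c0_pos
  have hH : HolderOnWith (Real.toNNReal ((4 / S.c0) ^ s)) (Real.toNNReal s) f (Set.range d.X) := by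
    rintro _ ⟨ω, rfl⟩ _ ⟨ω', rfl⟩
    rw [hfX, hfX, edist_dist, edist_dist, Real.coe_toNNReal _ hs.le,
      ENNReal.ofReal_rpow_of_nonneg dist_nonneg hs.le]
    have : ((Real.toNNReal ((4 / S.c0) ^ s) : NNReal) : ENNReal) = ENNReal.ofReal ((4 / S.c0) ^ s) := rfl
    rw [this, ← ENNReal.ofReal_mul (by positivity)]
    apply ENNReal.ofReal_le_ofReal
    rw [Real.dist_eq, Real.dist_eq]
    exact d.X_holder s hs hL hM ω ω'
  have hs' : 0 < Real.toNNReal s := Real.toNNReal_pos.2 hs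
  have h1 := hH.dimH_image_le hs'
  have h2 : Set.Icc (0:ℝ) 1 ⊆ f '' Set.range d.X := by
    intro x hx
    obtain ⟨ω, -, h⟩ := Real.ofDigits_SurjOn (b := S.M) S.hM2 hx
    exact ⟨d.X ω, ⟨ω, rfl⟩, by rw [hfX, h]⟩
  have h3 : dimH (Set.Icc (0:ℝ) 1) = 1 := by
    have := Real.dimH_of_nonempty_interior (E := ℝ) (s := Set.Icc (0:ℝ) 1)
      (by rw [interior_Icc]; exact ⟨1/2, by norm_num⟩)
    simpa using this
  have h4 := (dimH_mono h2).trans h1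
  rw [h3, ENNReal.le_div_iff_mul_le (Or.inl (by exact_mod_cast hs'.ne')) (Or.inl (by simp)), one_mul] at h4
  exact h4

end Dat
end Tw


namespace Tw

theorem count (P : ℕ → Prop) (n : ℕ → ℕ) (hn : StrictMono n) (hP : ∀ i, 1 ≤ n i ∧ P (n i))
    (a e : ℝ) (he : 0 < e) (hlog : ∀ i, Real.log (n i) ≤ Real.exp (a + e * i)) :
    ∃ c : ℝ, 0 < c ∧ ∃ N₀ : ℕ, ∀ N : ℕ, N₀ ≤ N → c * Real.log (Real.log N) ≤
      ({k : ℕ | 1 ≤ k ∧ k ≤ N ∧ P k} : Set ℕ).ncard := by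
  have ht : Tendsto (fun N : ℕ => Real.log (Real.log N)) atTop atTop :=
    Real.tendsto_log_atTop.comp (Real.tendsto_log_atTop.comp tendsto_natCast_atTop_atTop)
  obtain ⟨N₀, hN₀⟩ := Filter.eventually_atTop.1 (ht.eventually_ge_atTop (max (2 * (a + e)) 1))
  refine ⟨1 / (2 * e), by positivity, max N₀ 3, fun N hN => ?_⟩
  have hy := hN₀ N (le_trans (le_max_left _ _) hN)
  have hN3 : 3 ≤ N := le_trans (le_max_right _ _) hN
  have hNp : (0:ℝ) < N := by exact_mod_cast (by omega : 0 < N)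
  have hlN : 0 < Real.log N := Real.log_pos (by exact_mod_cast (by omega : 1 < N))
  set y := Real.log (Real.log N) with hydef
  have hey : Real.exp y = Real.log N := Real.exp_log hlN
  set m := ⌊(y - a) / e⌋₊ with hm
  have h1 : ∀ i < m, n i ≤ N := by
    intro i hi
    have hi1 : i + 1 ≤ m := hi
    have hnn : 0 ≤ (y - a) / e := by
      by_contra hc
      rw [hm, Nat.floor_of_nonpos (by linarith)] at hi
      omega
    have h2 : ((i + 1 : ℕ):ℝ) ≤ (y - a) / e := (Nat.cast_le.2 hi1).trans (Nat.floor_le hnn)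
    rw [le_div_iff₀ he] at h2
    push_cast at h2
    have h3 : Real.log (n i) ≤ Real.log N := by
      rw [← hey]
      refine (hlog i).trans (Real.exp_le_exp.2 ?_)
      nlinarith
    have h4 := (Real.log_le_log_iff (by exact_mod_cast (hP i).1) hNp).1 h3
    exact_mod_cast h4
  have h2 : m ≤ ({k : ℕ | 1 ≤ k ∧ k ≤ N ∧ P k} : Set ℕ).ncard := by
    have hfin : ({k : ℕ | 1 ≤ k ∧ k ≤ N ∧ P k} : Set ℕ).Finite :=
      (Set.finite_Iic N).subset fun k hk => hk.2.1
    calc m = (((Finset.range m).image n : Finset ℕ) : Set ℕ).ncard := by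
          rw [Set.ncard_coe_finset, Finset.card_image_of_injective _ hn.injective, Finset.card_range]
      _ ≤ _ := by
          apply Set.ncard_le_ncard _ hfin
          intro k hk
          simp only [Finset.coe_image, Finset.coe_range, Set.mem_image, Set.mem_Iio] at hk
          obtain ⟨i, hi, rfl⟩ := hk
          exact ⟨(hP i).1, h1 i hi, (hP i).2⟩
  have h3 : (y - a) / e < m + 1 := Nat.lt_floor_add_one _
  have h4 : 1 / (2 * e) * y ≤ (y - a) / e - 1 := by
    have := le_trans (le_max_left _ _) hy
    rw [show (y - a) / e - 1 = 1 / (2 * e) * (2 * (y - a) - 2 * e) by field_simp]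
    gcongr
    linarith
  have h5 : (m:ℝ) ≤ ({k : ℕ | 1 ≤ k ∧ k ≤ N ∧ P k} : Set ℕ).ncard := by exact_mod_cast h2
  linarith

theorem sq_le_two_pow (B : ℕ) : ∃ i0 : ℕ, ∀ I, i0 ≤ I → B * (I + 2) ^ 2 ≤ 2 ^ I := by
  have h := tendsto_pow_const_div_const_pow_of_one_lt 2 (show (1:ℝ) < 2 by norm_num)
  have hB : (0:ℝ) < 1 / (4 * (B + 1)) := by positivity
  obtain ⟨i0, hi⟩ := Filter.eventually_atTop.1 (h.eventually_le_const hB)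
  refine ⟨i0, fun I hI => ?_⟩
  have h1 := hi (I + 2) (by omega)
  rw [div_le_div_iff₀ (by positivity) (by positivity)] at h1
  push_cast at h1
  have h2 : (B:ℝ) * (I + 2) ^ 2 ≤ 2 ^ I := by
    rw [pow_add] at h1
    nlinarith [sq_nonneg ((I:ℝ) + 2)]
  exact_mod_cast h2

theorem seq (S : Sys) (c L J0 : ℕ) (nn : ℕ → ℕ) (h1 : ∀ k, 2 ^ (2 ^ k) ≤ nn k)
    (h2 : ∀ k, Real.log (nn k) ≤ 2 ^ (c + k)) :
    ∃ e i0 : ℕ, c + 3 ≤ e ∧ J0 ≤ i0 ∧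
      (∀ i, S.Q ^ (56 * (e * (i + 1 + i0 + 1)) + 136 * (e * (i + i0 + 1)) + 2) * nn (e * (i + i0))
        ≤ nn (e * (i + 1 + i0))) ∧
      (∀ i, S.Q ^ (56 * (e * (i + i0 + 1)) + 2 +
        2 * L * (∑ k ∈ Finset.range (i + 1), 68 * (e * (k + i0 + 1))) +
        2 * (∑ k ∈ Finset.range i, 68 * (e * (k + i0 + 1)))) ≤ nn (e * (i + i0))) := by
  set e := c + 3 with he
  obtain ⟨i1, hi1⟩ := sq_le_two_pow (S.Q * (e * (330 + 136 * L)))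
  refine ⟨e, max i1 J0, le_rfl, le_max_right _ _, ?_, ?_⟩
  all_goals
    generalize hi0 : max i1 J0 = i0
    have hi01 : i1 ≤ i0 := hi0 ▸ le_max_left _ _
    intro i
  · have up : ∀ k, nn k ≤ 2 ^ (2 ^ (c + k + 1)) := by
      intro k
      have h3 : Real.log (nn k) ≤ Real.log ((2:ℝ) ^ (2 ^ (c + k + 1))) := by
        rw [Real.log_pow]
        push_cast
        refine (h2 k).trans ?_
        have := Real.log_two_gt_d9
        rw [pow_succ]
        nlinarith [pow_pos (show (0:ℝ) < 2 by norm_num) (c + k)]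
      have hpos : (0:ℝ) < nn k := by
        exact_mod_cast lt_of_lt_of_le (by positivity) (h1 k)
      have h4 := (Real.log_le_log_iff hpos (by positivity)).1 h3
      exact_mod_cast h4
    have hA := hi1 (i + i0) (by omega)
    have hE : S.Q * (56 * (e * (i + 1 + i0 + 1)) + 136 * (e * (i + i0 + 1)) + 2) ≤ 2 ^ (i + i0) := by
      refine le_trans ?_ hA
      rw [mul_assoc, show i + 1 + i0 = i + i0 + 1 by omega]
      apply Nat.mul_le_mul_left
      generalize i + i0 = I at *
      have : 1 ≤ e := by omega
      nlinarith [Nat.zero_le (e * I), Nat.zero_le (e * (I * I)), Nat.zero_le (e * L * (I+2)^2)]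
    have hQ : ∀ m, S.Q ^ m ≤ 2 ^ (S.Q * m) := fun m => by
      rw [pow_mul]; exact Nat.pow_le_pow_left Nat.lt_two_pow_self.le m
    calc _ ≤ 2 ^ (2 ^ (i + i0)) * 2 ^ (2 ^ (c + e * (i + i0) + 1)) := by
          apply Nat.mul_le_mul _ (up _)
          exact (hQ _).trans (Nat.pow_le_pow_right (by norm_num) hE)
      _ ≤ 2 ^ (2 ^ (c + e * (i + i0) + 1)) * 2 ^ (2 ^ (c + e * (i + i0) + 1)) := by
          apply Nat.mul_le_mul_right
          apply Nat.pow_le_pow_right (by norm_num)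
          apply Nat.pow_le_pow_right (by norm_num)
          nlinarith
      _ = 2 ^ (2 ^ (c + e * (i + i0) + 2)) := by rw [← pow_add]; congr 1; ring
      _ ≤ 2 ^ (2 ^ (e * (i + 1 + i0))) := by
          apply Nat.pow_le_pow_right (by norm_num)
          apply Nat.pow_le_pow_right (by norm_num)
          nlinarith
      _ ≤ _ := h1 _
  · have hA := hi1 (i + i0) (by omega)
    have hF : ∀ m ≤ i + 1, ∑ k ∈ Finset.range m, 68 * (e * (k + i0 + 1)) ≤ 68 * e * (i + i0 + 1) ^ 2 := by
      intro m hm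
      calc _ ≤ ∑ k ∈ Finset.range m, 68 * (e * (i + i0 + 1)) := by
            apply Finset.sum_le_sum
            intro k hk
            have := Finset.mem_range.1 hk
            gcongr
            omega
        _ = m * (68 * (e * (i + i0 + 1))) := by simp
        _ ≤ (i + i0 + 1) * (68 * (e * (i + i0 + 1))) := by gcongr; omega
        _ = _ := by ring
    have hF1 := hF (i + 1) le_rfl
    have hF2 := hF i (by omega)
    have hQ : ∀ m, S.Q ^ m ≤ 2 ^ (S.Q * m) := fun m => by
      rw [pow_mul]; exact Nat.pow_le_pow_left Nat.lt_two_pow_self.le m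
    refine (hQ _).trans (le_trans ?_ (h1 _))
    apply Nat.pow_le_pow_right (by norm_num)
    have hee : i + i0 ≤ e * (i + i0) := Nat.le_mul_of_pos_left _ (by omega)
    refine le_trans ?_ (hA.trans (Nat.pow_le_pow_right (by norm_num) hee))
    rw [mul_assoc S.Q]
    apply Nat.mul_le_mul_left
    generalize i + i0 = I at *
    have h1e : 1 ≤ e := by omega
    have hF3 := Nat.mul_le_mul_left (2 * L) hF1
    have e3 : 2 * L * (68 * e * (I + 1) ^ 2) ≤ 136 * L * (e * (I + 2) ^ 2) := by
      nlinarith [Nat.zero_le (e * L), Nat.zero_le (e * L * I)]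
    nlinarith [Nat.zero_le (e * I), Nat.zero_le (e * (I * I))]

/-- The target set. -/
def GG (α γ δ : ℝ) : Set ℝ := {β | β ∈ Bad ∧ ∃ c : ℝ, 0 < c ∧ ∃ N₀ : ℕ, ∀ N : ℕ, N₀ ≤ N →
        c * Real.log (Real.log N) ≤
          ({n : ℕ | 1 ≤ n ∧ n ≤ N ∧
            (n : ℝ) * dni (n * α - γ) * dni (n * β - δ) ≤ 1 / Real.log n} : Set ℕ).ncard}

theorem GG_dim {α : ℝ} (hα : α ∈ KSet) (γ δ : ℝ) (s0 : ℝ) (hs0 : 0 < s0) (hs1 : s0 < 1) :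
    ENNReal.ofReal s0 ≤ dimH (GG α γ δ) := by
  obtain ⟨S, hS⟩ := exists_sys ((1 + s0) / 2) (by linarith) (by linarith)
  obtain ⟨L, hL⟩ := exists_nat_gt (2 * s0 / (1 - s0))
  have hLp : (0:ℝ) < L := lt_of_le_of_lt (div_nonneg (by linarith) (by linarith)) hL
  have hL1 : 1 ≤ L := by exact_mod_cast hLp
  obtain ⟨c, hc⟩ := inh hα γ
  choose nn hn1 hn2 hn3 using hc
  obtain ⟨J0, hJ0⟩ := S.hit
  obtain ⟨e, i0, hce, hJi, H2, H3⟩ := seq S c L J0 nn hn1 hn2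
  have hw : ∀ (i : ℕ) (g : Mb), ∃ w : List (Fin S.M), g.Gd →
      S.Q ^ (56 * (e * (i + i0 + 1))) * g.D ^ 2 ≤ nn (e * (i + i0)) →
      nn (e * (i + i0)) ≤ S.Q ^ (56 * (e * (i + i0 + 1)) + 2) * g.D ^ 2 →
      w.length = 68 * (e * (i + i0 + 1)) ∧ ∀ y ∈ Set.Icc (0:ℝ) 1,
        dni (nn (e * (i + i0)) * (S.fd g w).ev y - δ) ≤ 1 / 2 ^ (e * (i + i0 + 1)) := by
    intro i g
    by_cases hh : g.Gd ∧ S.Q ^ (56 * (e * (i + i0 + 1))) * g.D ^ 2 ≤ nn (e * (i + i0)) ∧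
      nn (e * (i + i0)) ≤ S.Q ^ (56 * (e * (i + i0 + 1)) + 2) * g.D ^ 2
    · obtain ⟨w, hw⟩ := hJ0 (e * (i + i0 + 1)) (by nlinarith) g hh.1 _ hh.2.1 hh.2.2 δ
      exact ⟨w, fun _ _ _ => hw⟩
    · exact ⟨[], fun a b c => absurd ⟨a, b, c⟩ hh⟩
  choose w hw using hw
  let d : Dat S := ⟨fun i => nn (e * (i + i0)), fun i => e * (i + i0 + 1), L, δ, w, hw, H2, H3⟩
  refine (d.X_dim s0 hs0 hL1 ?_).trans (dimH_mono ?_)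
  · refine le_trans (Real.rpow_le_rpow_of_exponent_le ?_ ?_) hS
    · exact_mod_cast (by have := S.hQ4; omega : 1 ≤ S.Q)
    · show 2 * (1 + 1 / (L:ℝ)) * s0 ≤ 2 * ((1 + s0) / 2)
      rw [div_lt_iff₀ (by linarith)] at hL
      have : s0 / L ≤ (1 - s0) / 2 := by
        rw [div_le_iff₀ hLp]; linarith
      have e1 : 2 * (1 + 1 / (L:ℝ)) * s0 = 2 * (s0 + s0 / L) := by field_simp
      rw [e1]; linarith
  · rintro _ ⟨ω, rfl⟩
    refine ⟨d.X_bad ω, ?_⟩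
    have h2n : ∀ k, 2 ≤ nn k := fun k =>
      le_trans (by simpa using Nat.pow_le_pow_right (n := 2) (by norm_num) (Nat.one_le_two_pow (n := k))) (hn1 k)
    refine count (fun n => (n : ℝ) * dni (n * α - γ) * dni (n * d.X ω - δ) ≤ 1 / Real.log n)
      (fun i => nn (e * (i + i0))) (strictMono_nat_of_lt_succ fun i => ?_) (fun i => ⟨?_, ?_⟩)
      (c + e * i0) e (by exact_mod_cast (by omega : 0 < e)) (fun i => ?_)
    · refine lt_of_lt_of_le ?_ (H2 i)
      have hQ : 1 < S.Q := by have := S.hQ4; omega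
      have := Nat.one_lt_pow (n := 56 * (e * (i + 1 + i0 + 1)) + 136 * (e * (i + i0 + 1)) + 2) (by omega) hQ
      have := h2n (e * (i + i0))
      nlinarith
    · have := h2n (e * (i + i0)); omega
    · have a1 := d.X_hit ω i
      change dni (nn (e * (i + i0)) * d.X ω - δ) ≤ 1 / 2 ^ (e * (i + i0 + 1)) at a1
      have a2 := hn3 (e * (i + i0))
      have a3 := hn2 (e * (i + i0))
      have a4 := h2n (e * (i + i0))
      have a5 : 0 < Real.log (nn (e * (i + i0))) := Real.log_pos (by exact_mod_cast a4)
      have a6 : (8:ℝ) * 2 ^ (c + e * (i + i0)) ≤ 2 ^ (e * (i + i0 + 1)) := by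
        rw [show (8:ℝ) = 2 ^ 3 by norm_num, ← pow_add]
        apply pow_le_pow_right₀ (by norm_num)
        nlinarith
      calc _ ≤ 5 * (1 / 2 ^ (e * (i + i0 + 1))) :=
            mul_le_mul a2 a1 (dni_nonneg _) (by norm_num)
        _ ≤ _ := by
          rw [mul_one_div, div_le_div_iff₀ (by positivity) a5]
          linarith
    · refine (hn2 _).trans ?_
      have : (2:ℝ) ≤ Real.exp 1 := by have := Real.exp_one_gt_d9; linarith
      calc (2:ℝ) ^ (c + e * (i + i0)) ≤ (Real.exp 1) ^ (c + e * (i + i0)) := by gcongr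
        _ = _ := by rw [← Real.exp_nat_mul]; congr 1; push_cast; ring

end Tw

theorem stmt_0 (α : ℝ) (hα : α ∈ KSet) (γ δ : ℝ) :
    ∃ G : Set ℝ, G ⊆ Bad ∧ dimH G = 1 ∧
      ∀ β ∈ G, ∃ c : ℝ, 0 < c ∧ ∃ N₀ : ℕ, ∀ N : ℕ, N₀ ≤ N →
        c * Real.log (Real.log N) ≤
          ({n : ℕ | 1 ≤ n ∧ n ≤ N ∧
            (n : ℝ) * dni (n * α - γ) * dni (n * β - δ) ≤ 1 / Real.log n} : Set ℕ).ncard := by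
  refine ⟨Tw.GG α γ δ, fun β hβ => hβ.1, le_antisymm ?_ ?_, fun β hβ => hβ.2⟩
  · refine (dimH_mono (Set.subset_univ _)).trans ?_
    rw [Real.dimH_univ]
  · refine le_of_forall_lt fun x hx => ?_
    have hxt : x ≠ ⊤ := (hx.trans ENNReal.one_lt_top).ne
    have hx1 : x.toReal < 1 := by
      have := (ENNReal.toReal_lt_toReal hxt ENNReal.one_ne_top).2 hx
      simpa using this
    have h0 : 0 ≤ x.toReal := ENNReal.toReal_nonneg
    have := Tw.GG_dim hα γ δ ((1 + x.toReal) / 2) (by linarith) (by linarith)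
    refine lt_of_lt_of_le ?_ this
    rw [ENNReal.lt_ofReal_iff_toReal_lt hxt]
    linarith
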